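/- arXiv:2510.25611 — 9 statements merged into one kernel-verified Lean document; each statement's English description precedes it below -/
import Mathlib

section
/- Fix integers a, b ≥ 1 and θ ∈ (0, π/2). Define the normal exponential map E(t, (u, v)) = (cos(θ + t)·u, sin(θ + t)·v) for t ∈ ℝ and unit vectors u ∈ ℝ^a, v ∈ ℝ^b. Then for every point (x, y) ∈ ℝ^a × ℝ^b with ‖x‖² + ‖y‖² = 1, x ≠ 0 and y ≠ 0, there exist exactly 4 triples (t, u, v) with t ∈ (−π, π], ‖u‖ = 1, ‖v‖ = 1 and E(t, (u, v)) = (x, y). -/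
/-!
If `cos (θ + t) • u = x` and `sin (θ + t) • v = y` with `u`, `v` of norm one, taking norms gives
`|cos (θ + t)| = ‖x‖` and `|sin (θ + t)| = ‖y‖`. Conversely, as `x` and `y` are nonzero, each such
`t` comes with exactly one pair `u`, `v`. So the fibre is counted by the four points
`(±‖x‖, ±‖y‖)` of the unit circle, each of which is `(cos (θ + t), sin (θ + t))` for exactly one
`t` in a period.
-/

open Real Set

theorem exists_cos_eq_and_sin_eq {c s : ℝ} (h : c ^ 2 + s ^ 2 = 1) :
    ∃ φ : ℝ, cos φ = c ∧ sin φ = s := by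
  have norm_eq : ‖(⟨c, s⟩ : ℂ)‖ = 1 := by rw [Complex.norm_eq_sqrt_sq_add_sq, h, sqrt_one]
  obtain ⟨φ, hφ⟩ := (Complex.norm_eq_one_iff _).1 norm_eq
  exact ⟨φ, by rw [← Complex.exp_ofReal_mul_I_re, hφ], by rw [← Complex.exp_ofReal_mul_I_im, hφ]⟩

theorem bijOn_cos_sin_add_Ioc (θ t₀ : ℝ) :
    BijOn (fun t ↦ (cos (θ + t), sin (θ + t))) (Ioc t₀ (t₀ + 2 * π))
      {p | p.1 ^ 2 + p.2 ^ 2 = 1} := by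
  refine ⟨fun t _ ↦ cos_sq_add_sin_sq (θ + t), fun t ht t' ht' h ↦ ?_, fun ⟨c, s⟩ hcs ↦ ?_⟩
  · obtain ⟨cos_eq, sin_eq⟩ := Prod.ext_iff.1 h
    have angle_eq : (t : Angle) = t' :=
      add_left_cancel (a := (θ : Angle)) (Angle.cos_sin_inj cos_eq sin_eq)
    have exp_eq : Circle.exp t = Circle.exp t' := congrArg Angle.toCircle angle_eq
    exact Circle.exp_injOn_Ioc (add_sub_cancel_left t₀ _).le ht ht' exp_eq
  · obtain ⟨φ, rfl, rfl⟩ := exists_cos_eq_and_sin_eq hcs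
    have periodic : Function.Periodic (fun t ↦ (cos (θ + t), sin (θ + t))) (2 * π) := fun t ↦ by
      simp only [← add_assoc, cos_add_two_pi, sin_add_two_pi]
    obtain ⟨t, ht, h⟩ := periodic.exists_mem_Ioc two_pi_pos (φ - θ) t₀
    exact ⟨t, ht, by simpa only [add_sub_cancel] using h.symm⟩

theorem ncard_setOf_abs_eq {G : Type*} [AddCommGroup G] [LinearOrder G] [IsOrderedAddMonoid G]
    {r : G} (hr : 0 < r) : {c : G | |c| = r}.ncard = 2 := by
  have eq_pair : {c : G | |c| = r} = {r, -r} := Set.ext fun c ↦ abs_eq hr.le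
  rw [eq_pair, ncard_pair (neg_lt_self hr).ne']

theorem ncard_abs_cos_eq_and_abs_sin_eq (θ t₀ : ℝ) {p q : ℝ} (hp : 0 < p) (hq : 0 < q)
    (hpq : p ^ 2 + q ^ 2 = 1) :
    {t ∈ Ioc t₀ (t₀ + 2 * π) | |cos (θ + t)| = p ∧ |sin (θ + t)| = q}.ncard = 4 := by
  have subset_circle :
      {c : ℝ | |c| = p} ×ˢ {s : ℝ | |s| = q} ⊆ {z | z.1 ^ 2 + z.2 ^ 2 = 1} := by
    rintro ⟨c, s⟩ ⟨rfl, rfl⟩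
    simpa only [sq_abs, mem_ofPred_eq] using hpq
  have bijOn := (bijOn_cos_sin_add_Ioc θ t₀).subset_right subset_circle
  calc _ = ({c : ℝ | |c| = p} ×ˢ {s : ℝ | |s| = q}).ncard := bijOn.ncard_eq
    _ = 4 := by rw [ncard_prod, ncard_setOf_abs_eq hp, ncard_setOf_abs_eq hq]

theorem norm_eq_one_and_smul_eq_iff {𝕜 E : Type*} [NormedDivisionRing 𝕜]
    [SeminormedAddCommGroup E] [Module 𝕜 E] [NormSMulClass 𝕜 E] {r : 𝕜} {u w : E} (hw : ‖w‖ ≠ 0) :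
    ‖u‖ = 1 ∧ r • u = w ↔ ‖r‖ = ‖w‖ ∧ u = r⁻¹ • w := by
  constructor
  · rintro ⟨hu, rfl⟩
    have norm_smul_eq : ‖r • u‖ = ‖r‖ := by rw [norm_smul, hu, mul_one]
    have hr : r ≠ 0 := norm_ne_zero_iff.1 (norm_smul_eq ▸ hw)
    exact ⟨norm_smul_eq.symm, (inv_smul_smul₀ hr u).symm⟩
  · rintro ⟨hrw, rfl⟩
    have hr : r ≠ 0 := norm_ne_zero_iff.1 (hrw ▸ hw)
    exact ⟨by rw [norm_smul, norm_inv, hrw, inv_mul_cancel₀ hw], smul_inv_smul₀ hr w⟩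

theorem normal_exponential_map_fibre_has_four_points_general {V W : Type*}
    [NormedAddCommGroup V] [NormedSpace ℝ V] [NormedAddCommGroup W] [NormedSpace ℝ W]
    (θ t₀ : ℝ) {x : V} {y : W} (hxy : ‖x‖ ^ 2 + ‖y‖ ^ 2 = 1) (hx : x ≠ 0) (hy : y ≠ 0) :
    {T : ℝ × (V × W) | T.1 ∈ Ioc t₀ (t₀ + 2 * π) ∧ ‖T.2.1‖ = 1 ∧ ‖T.2.2‖ = 1 ∧
      (cos (θ + T.1) • T.2.1, sin (θ + T.1) • T.2.2) = (x, y)}.ncard = 4 := by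
  let phases := {t ∈ Ioc t₀ (t₀ + 2 * π) | |cos (θ + t)| = ‖x‖ ∧ |sin (θ + t)| = ‖y‖}
  let preimageAt : ℝ → ℝ × (V × W) := fun t ↦ (t, (cos (θ + t))⁻¹ • x, (sin (θ + t))⁻¹ • y)
  have preimageAt_injective : Function.Injective preimageAt := fun _ _ h ↦ (Prod.ext_iff.1 h).1
  calc
    _ = (preimageAt '' phases).ncard := by
      congr 1
      ext ⟨t, u, v⟩
      have hu := norm_eq_one_and_smul_eq_iff (r := cos (θ + t)) (u := u) (norm_ne_zero_iff.2 hx)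
      have hv := norm_eq_one_and_smul_eq_iff (r := sin (θ + t)) (u := v) (norm_ne_zero_iff.2 hy)
      simp only [norm_eq_abs] at hu hv
      simp only [preimageAt, phases, mem_ofPred_eq, mem_image, Prod.mk.injEq]
      grind
    _ = phases.ncard := ncard_image_of_injective phases preimageAt_injective
    _ = 4 := ncard_abs_cos_eq_and_abs_sin_eq θ t₀ (norm_pos_iff.2 hx) (norm_pos_iff.2 hy) hxy

/-- For the isoparametric family of products of spheres with `g = 2` principal curvatures,
every point `(x, y)` of the unit sphere of `ℝ^a × ℝ^b` not on the focal set (i.e. with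
`x ≠ 0` and `y ≠ 0`) has exactly `4 = 2g` inverse images under the normal exponential map
`E(t, (u, v)) = (cos(θ+t)·u, sin(θ+t)·v)` with `t ∈ (−π, π]`. -/
theorem normal_exponential_map_fibre_has_four_points
    (a b : ℕ) (ha : 1 ≤ a) (hb : 1 ≤ b) (θ : ℝ) (hθ0 : 0 < θ) (hθ1 : θ < Real.pi / 2)
    (x : EuclideanSpace ℝ (Fin a)) (y : EuclideanSpace ℝ (Fin b))
    (hxy : ‖x‖ ^ 2 + ‖y‖ ^ 2 = 1) (hx : x ≠ 0) (hy : y ≠ 0) :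
    Set.ncard {T : ℝ × (EuclideanSpace ℝ (Fin a) × EuclideanSpace ℝ (Fin b)) |
        T.1 ∈ Set.Ioc (-Real.pi) Real.pi ∧ ‖T.2.1‖ = 1 ∧ ‖T.2.2‖ = 1 ∧
        (Real.cos (θ + T.1) • T.2.1, Real.sin (θ + T.1) • T.2.2) = (x, y)} = 4 := by
  have period_end : -Real.pi + 2 * Real.pi = Real.pi := by ring
  simpa only [period_end] using
    normal_exponential_map_fibre_has_four_points_general θ (-Real.pi) hxy hx hy
end

section
/- Fix integers a, b ≥ 1, θ ∈ (0, π/2), and p = (x, y) ∈ ℝ^a × ℝ^b with x ≠ 0 and y ≠ 0. Consider the smooth function g(u, v) = cos θ·⟪x, u⟫ + sin θ·⟪y, v⟫ on the product S^{a−1} × S^{b−1} of unit spheres (the height function ℓ_p composed with the embedding (u,v) ↦ (cos θ·u, sin θ·v)). Then the set of points where the differential (mfderiv) of g vanishes is exactly { (ε·x/‖x‖, δ·y/‖y‖) : ε, δ ∈ {+1, −1} }, and in particular g has exactly 4 critical points. -/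
open scoped RealInnerProductSpace Manifold

noncomputable instance factFinrankEuclidean (n : ℕ) :
    Fact (Module.finrank ℝ (EuclideanSpace ℝ (Fin (n + 1))) = n + 1) :=
  ⟨finrank_euclideanSpace_fin⟩

/-!
The differential of `(u, v) ↦ f u + g v` is the coproduct of the differentials of `f` and `g`, so
the critical set on the product of spheres is the product of the critical sets on the factors.
On one sphere the tangent space at `u` is `(ℝ ∙ u)ᗮ`, so `u` is critical for `⟪x, ·⟫` iff
`(ℝ ∙ u)ᗮ ≤ (ℝ ∙ x)ᗮ`, i.e. `x ∈ ℝ ∙ u`, which leaves exactly the two points `u = ±x/‖x‖`.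
-/

theorem coprod_eq_zero_iff {R M₁ M₂ M₃ : Type*} [Semiring R]
    [TopologicalSpace M₁] [AddCommMonoid M₁] [Module R M₁]
    [TopologicalSpace M₂] [AddCommMonoid M₂] [Module R M₂]
    [TopologicalSpace M₃] [AddCommMonoid M₃] [Module R M₃] [ContinuousAdd M₃]
    {A : M₁ →L[R] M₃} {B : M₂ →L[R] M₃} : A.coprod B = 0 ↔ A = 0 ∧ B = 0 := by
  simp [ContinuousLinearMap.prod_ext_iff]

section CriticalPoints

variable {𝕜 E E' H H' M M' V : Type*} [NontriviallyNormedField 𝕜]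
  [NormedAddCommGroup E] [NormedSpace 𝕜 E] [TopologicalSpace H] {I : ModelWithCorners 𝕜 E H}
  [TopologicalSpace M] [ChartedSpace H M]
  [NormedAddCommGroup E'] [NormedSpace 𝕜 E'] [TopologicalSpace H'] {I' : ModelWithCorners 𝕜 E' H'}
  [TopologicalSpace M'] [ChartedSpace H' M']
  [NormedAddCommGroup V] [NormedSpace 𝕜 V]

variable (I) in
/-- The critical points of a scalar function `f` on a manifold: the zeros of its differential.
Since `mfderiv` is `0` where `f` is not differentiable, such points are included. -/
def criticalPoints (f : M → 𝕜) : Set M :=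
  {p | mfderiv I 𝓘(𝕜, 𝕜) f p = 0}

theorem hasMFDerivAt_add_prod {f : M → V} {g : M' → V} {q : M × M'}
    {f' : TangentSpace I q.1 →L[𝕜] V} {g' : TangentSpace I' q.2 →L[𝕜] V}
    (hf : HasMFDerivAt I 𝓘(𝕜, V) f q.1 f') (hg : HasMFDerivAt I' 𝓘(𝕜, V) g q.2 g') :
    HasMFDerivAt (I.prod I') 𝓘(𝕜, V) (fun r : M × M' ↦ f r.1 + g r.2) q (f'.coprod g') :=
  (hf.comp q (hasMFDerivAt_fst q)).add (hg.comp q (hasMFDerivAt_snd q))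

theorem criticalPoints_add_prod {f : M → 𝕜} {g : M' → 𝕜}
    (hf : MDifferentiable I 𝓘(𝕜, 𝕜) f) (hg : MDifferentiable I' 𝓘(𝕜, 𝕜) g) :
    criticalPoints (I.prod I') (fun q : M × M' ↦ f q.1 + g q.2) =
      criticalPoints I f ×ˢ criticalPoints I' g := by
  ext q
  have hsum := hasMFDerivAt_add_prod (hf q.1).hasMFDerivAt (hg q.2).hasMFDerivAt
  exact (Eq.congr_left hsum.mfderiv).trans coprod_eq_zero_iff

end CriticalPoints

section Poles

variable {E F : Type*} [NormedAddCommGroup E] [NormedSpace ℝ E]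
  [NormedAddCommGroup F] [NormedSpace ℝ F] {x : E}

/-- The poles `±x/‖x‖`: the points in which the line through `x` meets the unit sphere. For `x = 0`
there are none, since `‖0‖⁻¹ • 0 = 0` does not lie on the sphere. -/
def poles (x : E) : Set (Metric.sphere (0 : E) 1) :=
  {u | ∃ ε : ℝ, (ε = 1 ∨ ε = -1) ∧ (u : E) = ε • ‖x‖⁻¹ • x}

theorem poles_eq_pair {p : Metric.sphere (0 : E) 1} (hp : (p : E) = ‖x‖⁻¹ • x) :
    poles x = {p, -p} := by
  ext u
  simp [poles, or_and_right, exists_or, Subtype.ext_iff, hp]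

theorem ncard_poles (hx : x ≠ 0) : (poles x).ncard = 2 := by
  let p : Metric.sphere (0 : E) 1 :=
    ⟨NormedSpace.normalize x, mem_sphere_zero_iff_norm.2 (NormedSpace.norm_normalize hx)⟩
  rw [poles_eq_pair (p := p) rfl, Set.ncard_pair (ne_neg_of_mem_unit_sphere ℝ p)]

theorem mem_poles_iff_mem_span (hx : x ≠ 0) {u : Metric.sphere (0 : E) 1} :
    u ∈ poles x ↔ x ∈ Submodule.span ℝ {(u : E)} := by
  rw [Submodule.mem_span_singleton]
  constructor
  · rintro ⟨ε, hε, hu⟩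
    refine ⟨ε * ‖x‖, ?_⟩
    rcases hε with rfl | rfl <;> simp [hu, hx]
  · rintro ⟨c, rfl⟩
    have hc : c ≠ 0 := (smul_ne_zero_iff.1 hx).1
    have hnormalize : ‖c • (u : E)‖⁻¹ • c • (u : E) = (SignType.sign c : ℝ) • (u : E) := by
      rw [← NormedSpace.normalize, NormedSpace.normalize_smul,
        NormedSpace.normalize_eq_self_of_norm_eq_one (norm_eq_of_mem_sphere u)]
    refine ⟨SignType.sign c, ?_⟩
    rw [hnormalize]
    rcases hc.lt_or_gt with hneg | hpos
    · simp [hneg]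
    · simp [hpos]

theorem poles_prod_poles (x : E) (y : F) :
    poles x ×ˢ poles y = {q | ∃ ε δ : ℝ, (ε = 1 ∨ ε = -1) ∧ (δ = 1 ∨ δ = -1) ∧
      (q.1 : E) = ε • ‖x‖⁻¹ • x ∧ (q.2 : F) = δ • ‖y‖⁻¹ • y} := by
  ext q
  constructor
  · rintro ⟨⟨ε, hε, hu⟩, δ, hδ, hv⟩
    exact ⟨ε, δ, hε, hδ, hu, hv⟩
  · rintro ⟨ε, δ, hε, hδ, hu, hv⟩
    exact ⟨⟨ε, hε, hu⟩, δ, hδ, hv⟩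

end Poles

section Orthogonal

variable {𝕜 E : Type*} [RCLike 𝕜] [NormedAddCommGroup E] [InnerProductSpace 𝕜 E]

theorem ker_innerSL_eq_orthogonal (x : E) :
    (innerSL 𝕜 x).ker = (Submodule.span 𝕜 {x})ᗮ := by
  ext w
  simp [Submodule.mem_orthogonal_singleton_iff_inner_right]

theorem orthogonal_span_le_ker_innerSL_iff {x u : E} :
    (Submodule.span 𝕜 {u})ᗮ ≤ (innerSL 𝕜 x).ker ↔ x ∈ Submodule.span 𝕜 {u} := by
  rw [ker_innerSL_eq_orthogonal, ← Submodule.span_singleton_le_iff_mem]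
  refine ⟨fun h ↦ ?_, Submodule.orthogonal_le⟩
  simpa only [Submodule.orthogonal_orthogonal] using Submodule.orthogonal_le h

end Orthogonal

section Sphere

variable {E V : Type*} [NormedAddCommGroup E] [InnerProductSpace ℝ E] {n : ℕ}
  [Fact (Module.finrank ℝ E = n + 1)] [NormedAddCommGroup V] [NormedSpace ℝ V]

theorem hasMFDerivAt_comp_coe_sphere {f : E → V} {f' : E →L[ℝ] V} {u : Metric.sphere (0 : E) 1}
    (hf : HasFDerivAt f f' u) :
    HasMFDerivAt (𝓡 n) 𝓘(ℝ, V) (fun v : Metric.sphere (0 : E) 1 ↦ f v) u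
      (f' ∘L mvfderiv (𝓡 n) ((↑) : Metric.sphere (0 : E) 1 → E) u) :=
  hf.hasMFDerivAt.comp u
    ((contMDiff_coe_sphere (m := 1)).mdifferentiableAt one_ne_zero).hasMFDerivAt

theorem mfderiv_comp_coe_sphere_eq_zero_iff {f : E → V} {f' : E →L[ℝ] V}
    {u : Metric.sphere (0 : E) 1} (hf : HasFDerivAt f f' u) :
    mfderiv (𝓡 n) 𝓘(ℝ, V) (fun v : Metric.sphere (0 : E) 1 ↦ f v) u = 0 ↔
      (Submodule.span ℝ {(u : E)})ᗮ ≤ f'.ker := by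
  rw [(hasMFDerivAt_comp_coe_sphere hf).mfderiv, ← range_mvfderiv_subtypeVal (n := n) u,
    LinearMap.range_le_ker_iff]
  exact ContinuousLinearMap.coe_inj.symm

theorem mdifferentiable_const_mul_inner_sphere (c : ℝ) (x : E) :
    MDifferentiable (𝓡 n) 𝓘(ℝ, ℝ) (fun u : Metric.sphere (0 : E) 1 ↦ c * ⟪x, (u : E)⟫) :=
  fun _ ↦ (hasMFDerivAt_comp_coe_sphere
    ((innerSL ℝ x).hasFDerivAt.const_mul c)).mdifferentiableAt

theorem criticalPoints_const_mul_inner_sphere {c : ℝ} (hc : c ≠ 0) {x : E} (hx : x ≠ 0) :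
    criticalPoints (𝓡 n) (fun u : Metric.sphere (0 : E) 1 ↦ c * ⟪x, (u : E)⟫) = poles x := by
  ext u
  have hcrit := mfderiv_comp_coe_sphere_eq_zero_iff (n := n) (u := u)
    ((innerSL ℝ x).hasFDerivAt.const_mul c)
  rw [ContinuousLinearMap.toLinearMap_smul, LinearMap.ker_smul _ _ hc,
    orthogonal_span_le_ker_innerSL_iff, ← mem_poles_iff_mem_span hx] at hcrit
  exact hcrit

end Sphere

theorem product_of_spheres_height_function_critical_points_general {E F : Type*}
    [NormedAddCommGroup E] [InnerProductSpace ℝ E] [NormedAddCommGroup F] [InnerProductSpace ℝ F]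
    {m n : ℕ} [Fact (Module.finrank ℝ E = m + 1)] [Fact (Module.finrank ℝ F = n + 1)]
    {c d : ℝ} (hc : c ≠ 0) (hd : d ≠ 0) {x : E} {y : F} (hx : x ≠ 0) (hy : y ≠ 0) :
    criticalPoints ((𝓡 m).prod (𝓡 n))
        (fun q : Metric.sphere (0 : E) 1 × Metric.sphere (0 : F) 1 ↦
          c * ⟪x, (q.1 : E)⟫ + d * ⟪y, (q.2 : F)⟫) = poles x ×ˢ poles y ∧
      (criticalPoints ((𝓡 m).prod (𝓡 n))
        (fun q : Metric.sphere (0 : E) 1 × Metric.sphere (0 : F) 1 ↦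
          c * ⟪x, (q.1 : E)⟫ + d * ⟪y, (q.2 : F)⟫)).ncard = 4 := by
  rw [criticalPoints_add_prod (mdifferentiable_const_mul_inner_sphere c x)
      (mdifferentiable_const_mul_inner_sphere d y),
    criticalPoints_const_mul_inner_sphere hc hx, criticalPoints_const_mul_inner_sphere hd hy]
  exact ⟨rfl, by rw [Set.ncard_prod, ncard_poles hx, ncard_poles hy]⟩

/-- The height function `ℓ_p`, `p = (x, y)` with `x ≠ 0 ≠ y`, restricted to the
isoparametric hypersurface `S^{a-1}(cos θ) × S^{b-1}(sin θ)` (pulled back to the product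
of unit spheres via `(u, v) ↦ (cos θ · u, sin θ · v)`) has critical set exactly
`{(±x/‖x‖, ±y/‖y‖)}`, hence exactly `4 = 2g` critical points. -/
theorem product_of_spheres_height_function_critical_points
    (a b : ℕ) (θ : ℝ) (hθ0 : 0 < θ) (hθ1 : θ < Real.pi / 2)
    (x : EuclideanSpace ℝ (Fin (a + 1))) (y : EuclideanSpace ℝ (Fin (b + 1)))
    (hx : x ≠ 0) (hy : y ≠ 0) :
    {q : Metric.sphere (0 : EuclideanSpace ℝ (Fin (a + 1))) 1 ×
          Metric.sphere (0 : EuclideanSpace ℝ (Fin (b + 1))) 1 |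
        mfderiv ((𝓡 a).prod (𝓡 b)) 𝓘(ℝ, ℝ)
          (fun q : Metric.sphere (0 : EuclideanSpace ℝ (Fin (a + 1))) 1 ×
              Metric.sphere (0 : EuclideanSpace ℝ (Fin (b + 1))) 1 =>
            Real.cos θ * ⟪x, (q.1 : EuclideanSpace ℝ (Fin (a + 1)))⟫ +
              Real.sin θ * ⟪y, (q.2 : EuclideanSpace ℝ (Fin (b + 1)))⟫) q = 0} =
      {q : Metric.sphere (0 : EuclideanSpace ℝ (Fin (a + 1))) 1 ×
          Metric.sphere (0 : EuclideanSpace ℝ (Fin (b + 1))) 1 |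
        ∃ ε δ : ℝ, (ε = 1 ∨ ε = -1) ∧ (δ = 1 ∨ δ = -1) ∧
          (q.1 : EuclideanSpace ℝ (Fin (a + 1))) = ε • ‖x‖⁻¹ • x ∧
          (q.2 : EuclideanSpace ℝ (Fin (b + 1))) = δ • ‖y‖⁻¹ • y} ∧
    Set.ncard {q : Metric.sphere (0 : EuclideanSpace ℝ (Fin (a + 1))) 1 ×
          Metric.sphere (0 : EuclideanSpace ℝ (Fin (b + 1))) 1 |
        mfderiv ((𝓡 a).prod (𝓡 b)) 𝓘(ℝ, ℝ)
          (fun q : Metric.sphere (0 : EuclideanSpace ℝ (Fin (a + 1))) 1 ×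
              Metric.sphere (0 : EuclideanSpace ℝ (Fin (b + 1))) 1 =>
            Real.cos θ * ⟪x, (q.1 : EuclideanSpace ℝ (Fin (a + 1)))⟫ +
              Real.sin θ * ⟪y, (q.2 : EuclideanSpace ℝ (Fin (b + 1)))⟫) q = 0} = 4 := by
  have hcos : Real.cos θ ≠ 0 := (Real.cos_pos_of_mem_Ioo ⟨by linarith, hθ1⟩).ne'
  have hsin : Real.sin θ ≠ 0 := (Real.sin_pos_of_pos_of_lt_pi hθ0 (by linarith)).ne'
  rw [← poles_prod_poles]
  exact product_of_spheres_height_function_critical_points_general hcos hsin hx hy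
end

section
/- Let A be a real 3×3 symmetric matrix with trace A = 0, and let B = adjugate(A) − (trace(adjugate A)/3)·1 (the trace-free part of the adjugate). Then trace(Bᵀ B) = (trace(A·A))²/6. Equivalently, the gradient of the Cartan–Münzner cubic F(A) = 3√6·det A, computed within the 5-dimensional inner product space of traceless symmetric 3×3 matrices with the Frobenius inner product, has squared norm 9·‖A‖⁴, verifying Münzner's equation |grad F|² = g²·r^{2g−2} with g = 3. -/
open Matrix

/-!
For a `3 × 3` matrix `M`, the second elementary symmetric function of the eigenvalues is
`trace (adj M)`, so Newton's identity reads `trace (M²) = (trace M)² - 2 trace (adj M)`. Apply it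
twice: to `A`, and to `adj A`, where `adj (adj A) = det A • A` is again trace-free. With
`t = trace (adj A)` this gives `trace (A²) = -2t` and `trace ((adj A)²) = t²`, and removing the
trace part of `adj A` leaves `t² - t²/3 = (2t)²/6`.
-/

section TraceFreePart

variable {n K : Type*} [Fintype n] [DecidableEq n] [Field K]

/-- The trace-free part of a square matrix, its component orthogonal to the scalar matrices for the
trace form. If the size of the matrix vanishes in `K`, division by zero makes this the matrix
itself. -/
def traceFreePart (M : Matrix n n K) : Matrix n n K :=
  M - (M.trace / Fintype.card n) • (1 : Matrix n n K)

theorem isSymm_traceFreePart {M : Matrix n n K} (hM : M.IsSymm) : (traceFreePart M).IsSymm :=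
  hM.sub (isSymm_one.smul _)

theorem trace_traceFreePart_mul_self (M : Matrix n n K) :
    (traceFreePart M * traceFreePart M).trace
      = (M * M).trace - M.trace ^ 2 / Fintype.card n := by
  set c : K := (Fintype.card n : K) with hc
  have expand : (traceFreePart M * traceFreePart M).trace
      = (M * M).trace - 2 * (M.trace / c) * M.trace + (M.trace / c) ^ 2 * c := by
    simp only [traceFreePart, sub_mul, mul_sub, smul_mul_assoc, mul_smul_comm, one_mul, mul_one,
      trace_sub, trace_smul, trace_one, smul_eq_mul, ← hc]
    ring
  rw [expand]
  by_cases h : c = 0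
  · simp [h]
  · field_simp
    ring

end TraceFreePart

section FinThree

variable {R : Type*} [CommRing R]

theorem trace_mul_self_fin_three (M : Matrix (Fin 3) (Fin 3) R) :
    (M * M).trace = M.trace ^ 2 - 2 * M.adjugate.trace := by
  simp only [adjugate_fin_three, trace_fin_three, mul_apply, Fin.sum_univ_three, of_apply,
    cons_val]
  ring

theorem trace_adjugate_mul_self_fin_three (A : Matrix (Fin 3) (Fin 3) R) :
    (A.adjugate * A.adjugate).trace = A.adjugate.trace ^ 2 - 2 * (A.det * A.trace) := by
  have adjugate_adjugate_eq : A.adjugate.adjugate = A.det • A := by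
    simpa using adjugate_adjugate A (by simp)
  rw [trace_mul_self_fin_three, adjugate_adjugate_eq, trace_smul, smul_eq_mul]

end FinThree

section Field

variable {K : Type*} [Field K]

theorem trace_traceFreePart_adjugate_mul_self (h3 : (3 : K) ≠ 0) {A : Matrix (Fin 3) (Fin 3) K}
    (htr : A.trace = 0) :
    (traceFreePart A.adjugate * traceFreePart A.adjugate).trace
      = 2 / 3 * A.adjugate.trace ^ 2 := by
  rw [trace_traceFreePart_mul_self, trace_adjugate_mul_self_fin_three, htr, Fintype.card_fin]
  push_cast
  field_simp
  ring

theorem gradient_of_cartan_munzner_cubic_norm_sq_general (h6 : (6 : K) ≠ 0)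
    (A : Matrix (Fin 3) (Fin 3) K) (hsymm : Aᵀ = A) (htr : A.trace = 0)
    (B : Matrix (Fin 3) (Fin 3) K)
    (hB : B = A.adjugate - ((A.adjugate.trace) / 3) • (1 : Matrix (Fin 3) (Fin 3) K)) :
    (Bᵀ * B).trace = ((A * A).trace) ^ 2 / 6 := by
  have h3 : (3 : K) ≠ 0 := fun h ↦ h6 (by linear_combination 2 * h)
  have B_eq : B = traceFreePart A.adjugate := by simp [hB, traceFreePart]
  have B_symm : Bᵀ = B := B_eq ▸ isSymm_traceFreePart (IsSymm.adjugate hsymm)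
  have trace_sq : (A * A).trace = -2 * A.adjugate.trace := by
    rw [trace_mul_self_fin_three, htr]
    ring
  rw [B_symm, B_eq, trace_traceFreePart_adjugate_mul_self h3 htr, trace_sq]
  field_simp
  ring

end Field

/-- For a traceless symmetric real 3×3 matrix `A`, the trace-free part `B` of the
adjugate of `A` (which is the gradient of the Cartan–Münzner cubic `F = 3√6·det`, up to
the factor `3√6`, within the space of traceless symmetric matrices) satisfies
`trace(Bᵀ B) = (trace (A·A))² / 6`; equivalently `|grad F|² = 9 ‖A‖⁴`. -/
theorem gradient_of_cartan_munzner_cubic_norm_sq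
    (A : Matrix (Fin 3) (Fin 3) ℝ) (hsymm : Aᵀ = A) (htr : A.trace = 0)
    (B : Matrix (Fin 3) (Fin 3) ℝ)
    (hB : B = A.adjugate - ((A.adjugate.trace) / 3) • (1 : Matrix (Fin 3) (Fin 3) ℝ)) :
    (Bᵀ * B).trace = ((A * A).trace) ^ 2 / 6 :=
  gradient_of_cartan_munzner_cubic_norm_sq_general (by norm_num) A hsymm htr B hB
end

section
/- Let V be the subspace of real 3×3 matrices consisting of symmetric matrices with trace zero (a 5-dimensional real inner product space under the Frobenius inner product ⟪X, Y⟫_F = trace(Xᵀ Y)). Then for every orthonormal basis E₁, …, E₅ of V and every A ∈ V, Σᵢ trace(adjugate(Eᵢ)·A) = 0. Equivalently, the cubic F(A) = 3√6·det A is harmonic on V (its Laplacian vanishes), verifying Münzner's equation ΔF = c·r^{g−2} with c = 0 since the two multiplicities are equal. -/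
open Matrix

/-!
An orthonormal basis `E` of the traceless symmetric `n × n` matrices computes the orthogonal
projection onto that space: `∑ i, tr (E i * M) • E i = (M + Mᵀ) / 2 - (tr M / n) • 1`. Taking
matrix units for `M` and contracting the two inner indices shows that `∑ i, E i ^ 2` is a scalar
matrix. For `n = 3`, Cayley–Hamilton expresses `adjugate (E i)` as `E i ^ 2` plus a scalar matrix,
so `∑ i, adjugate (E i)` is scalar and therefore Frobenius-orthogonal to every traceless matrix.
-/

section Biorthogonal

variable {ι R M : Type*} [Fintype ι] [DecidableEq ι] [CommRing R] [AddCommGroup M] [Module R M]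

theorem sum_dual_apply_smul_eq_of_mem_span {f : ι → Module.Dual R M} {e : ι → M}
    (hfe : ∀ i j, f i (e j) = if i = j then 1 else 0) {x : M}
    (hx : x ∈ Submodule.span R (Set.range e)) : ∑ i, f i x • e i = x := by
  obtain ⟨c, rfl⟩ := (Submodule.mem_span_range_iff_exists_fun R).mp hx
  simp [hfe]

end Biorthogonal

section SymmetricMatrices

variable (n R K : Type*) [CommRing R] [Field K]

/-- The module of symmetric matrices. -/
def symmetricMatrices : Submodule R (Matrix n n R) where
  carrier := {M | M.IsSymm}
  add_mem' hM hN := hM.add hN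
  zero_mem' := isSymm_zero
  smul_mem' c _ hM := hM.smul c

/-- A symmetric matrix is the same as a function of the unordered pair of its indices. -/
def symmetricMatricesEquivSym2 : symmetricMatrices n R ≃ₗ[R] (Sym2 n → R) where
  toFun M := Sym2.lift ⟨M.1, fun a b => M.2.apply b a⟩
  map_add' _ _ := by
    ext ⟨a, b⟩
    rfl
  map_smul' _ _ := by
    ext ⟨a, b⟩
    rfl
  invFun f := ⟨Matrix.of fun a b => f s(a, b), by ext a b; simp [Sym2.eq_swap]⟩
  left_inv _ := rfl
  right_inv _ := by
    ext ⟨a, b⟩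
    rfl

variable [Fintype n]

/-- The module of symmetric matrices with trace zero. -/
def tracelessSymmetricMatrices : Submodule R (Matrix n n R) :=
  symmetricMatrices n R ⊓ LinearMap.ker (traceLinearMap n R R)

variable {n R} in
theorem mem_tracelessSymmetricMatrices {M : Matrix n n R} :
    M ∈ tracelessSymmetricMatrices n R ↔ M.IsSymm ∧ M.trace = 0 :=
  Iff.rfl

theorem finrank_symmetricMatrices :
    Module.finrank K (symmetricMatrices n K) = (Fintype.card n + 1).choose 2 := by
  classical
  rw [(symmetricMatricesEquivSym2 n K).finrank_eq, Module.finrank_fintype_fun_eq_card, Sym2.card]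

theorem finrank_tracelessSymmetricMatrices_add_one [Nonempty n] :
    Module.finrank K (tracelessSymmetricMatrices n K) + 1 = (Fintype.card n + 1).choose 2 := by
  classical
  let trace : Module.Dual K (symmetricMatrices n K) :=
    (traceLinearMap n K K).domRestrict (symmetricMatrices n K)
  have trace_ne_zero : trace ≠ 0 := by
    let a : n := Classical.arbitrary n
    have single_mem : single a a (1 : K) ∈ symmetricMatrices n K := transpose_single a a 1
    intro h
    simpa [trace, trace_single_eq_same] using LinearMap.congr_fun h ⟨_, single_mem⟩
  have map_ker : (LinearMap.ker trace).map (symmetricMatrices n K).subtype =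
      tracelessSymmetricMatrices n K := by
    rw [LinearMap.ker_domRestrict]
    exact Submodule.map_comap_subtype _ _
  rw [← map_ker, Submodule.finrank_map_subtype_eq, ← finrank_symmetricMatrices n K,
    Module.Dual.finrank_ker_add_one_of_ne_zero trace_ne_zero]

end SymmetricMatrices

section OrthonormalBasis

variable {ι n R K : Type*} [DecidableEq ι] [Fintype n] [CommRing R] [Field K]

/-- `E` is an orthonormal basis of the traceless symmetric matrices for the Frobenius form
`(X, Y) ↦ tr (Xᵀ Y)`. Linear independence is not a field, since orthonormality implies it. -/
structure IsFrobeniusOrthonormalBasis (E : ι → Matrix n n R) : Prop where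
  span_range : Submodule.span R (Set.range E) = tracelessSymmetricMatrices n R
  trace_transpose_mul : ∀ i j, ((E i)ᵀ * E j).trace = if i = j then 1 else 0

/-- The linear form `X ↦ tr (Mᵀ X)`, i.e. the Frobenius pairing with `M`. -/
def frobeniusDual (M : Matrix n n R) : Module.Dual R (Matrix n n R) :=
  traceLinearMap n R R ∘ₗ LinearMap.mulLeft R Mᵀ

theorem frobeniusDual_apply (M X : Matrix n n R) : frobeniusDual M X = (Mᵀ * X).trace :=
  rfl

namespace IsFrobeniusOrthonormalBasis

theorem of_card_add_one [Fintype ι] [Nonempty n] {E : ι → Matrix n n K}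
    (hsymm : ∀ i, (E i).IsSymm) (htr : ∀ i, (E i).trace = 0)
    (horth : ∀ i j, ((E i)ᵀ * E j).trace = if i = j then 1 else 0)
    (hcard : Fintype.card ι + 1 = (Fintype.card n + 1).choose 2) :
    IsFrobeniusOrthonormalBasis E where
  span_range := by
    have linearIndependent : LinearIndependent K E :=
      .of_pairwise_dual_eq_zero_one E (fun i => frobeniusDual (E i))
        (fun i j hij => by simp [frobeniusDual_apply, horth, hij])
        (fun i => by simp [frobeniusDual_apply, horth])
    have span_le : Submodule.span K (Set.range E) ≤ tracelessSymmetricMatrices n K :=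
      Submodule.span_le.mpr <| Set.range_subset_iff.mpr fun i => ⟨hsymm i, htr i⟩
    refine Submodule.eq_of_le_of_finrank_eq span_le ?_
    have finrank_add_one := finrank_tracelessSymmetricMatrices_add_one n K
    rw [finrank_span_eq_card linearIndependent]
    lia
  trace_transpose_mul := horth

variable {E : ι → Matrix n n R}

theorem mem (hE : IsFrobeniusOrthonormalBasis E) (i : ι) :
    E i ∈ tracelessSymmetricMatrices n R :=
  hE.span_range ▸ Submodule.subset_span (Set.mem_range_self i)

theorem isSymm (hE : IsFrobeniusOrthonormalBasis E) (i : ι) : (E i).IsSymm :=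
  (mem_tracelessSymmetricMatrices.mp (hE.mem i)).1

theorem trace_eq_zero (hE : IsFrobeniusOrthonormalBasis E) (i : ι) : (E i).trace = 0 :=
  (mem_tracelessSymmetricMatrices.mp (hE.mem i)).2

theorem trace_sq [DecidableEq n] (hE : IsFrobeniusOrthonormalBasis E) (i : ι) :
    (E i ^ 2).trace = 1 := by
  simpa [sq, (hE.isSymm i).eq] using hE.trace_transpose_mul i i

variable [Fintype ι]

theorem sum_trace_mul_smul_eq (hE : IsFrobeniusOrthonormalBasis E) {X : Matrix n n R}
    (hX : X ∈ tracelessSymmetricMatrices n R) : ∑ i, (E i * X).trace • E i = X := by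
  simpa only [frobeniusDual_apply, (hE.isSymm _).eq] using
    sum_dual_apply_smul_eq_of_mem_span (f := fun i => frobeniusDual (E i))
      hE.trace_transpose_mul (hE.span_range ▸ hX)

variable [DecidableEq n]

-- The right-hand side is `2n` times the orthogonal projection of `M` to the traceless symmetric
-- matrices; the factor avoids dividing by `2` and `n` in `R`.
theorem two_mul_card_smul_sum_trace_mul_smul (hE : IsFrobeniusOrthonormalBasis E)
    (M : Matrix n n R) :
    (2 * Fintype.card n : R) • ∑ i, (E i * M).trace • E i =
      (Fintype.card n : R) • (M + Mᵀ) - (2 * M.trace) • 1 := by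
  have projection_mem : (Fintype.card n : R) • (M + Mᵀ) - (2 * M.trace) • 1 ∈
      tracelessSymmetricMatrices n R := by
    rw [mem_tracelessSymmetricMatrices]
    refine ⟨((isSymm_add_transpose_self M).smul _).sub (isSymm_one.smul _), ?_⟩
    simp only [trace_sub, trace_smul, trace_add, trace_transpose, trace_one, smul_eq_mul]
    ring
  have trace_mul_transpose (i : ι) : (E i * Mᵀ).trace = (E i * M).trace := by
    rw [← trace_transpose, transpose_mul, transpose_transpose, (hE.isSymm i).eq, trace_mul_comm]
  rw [← hE.sum_trace_mul_smul_eq projection_mem, Finset.smul_sum]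
  refine Finset.sum_congr rfl fun i _ => ?_
  rw [smul_smul]
  congr 1
  simp only [mul_sub, mul_add, mul_smul_comm, mul_one, trace_sub, trace_add, trace_smul,
    trace_mul_transpose, hE.trace_eq_zero, smul_eq_mul]
  ring

theorem two_mul_card_mul_sum_apply_mul_apply (hE : IsFrobeniusOrthonormalBasis E) (a b c d : n) :
    (2 * Fintype.card n : R) * ∑ i, E i a b * E i c d =
      Fintype.card n * ((1 : Matrix n n R) b c * (1 : Matrix n n R) a d +
        (1 : Matrix n n R) a c * (1 : Matrix n n R) b d) -
      2 * (1 : Matrix n n R) a b * (1 : Matrix n n R) c d := by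
  have projection_single := congr_fun₂ (hE.two_mul_card_smul_sum_trace_mul_smul (single b a 1)) c d
  have trace_single (a b : n) : (single b a (1 : R)).trace = (1 : Matrix n n R) a b := by
    simpa using trace_single_mul b a (1 : R) 1
  have single_eq (a b : n) :
      single a b (1 : R) c d = (1 : Matrix n n R) a c * (1 : Matrix n n R) b d := by
    simp only [single_apply, one_apply, ite_and, ite_mul, one_mul, zero_mul]
  simpa only [Matrix.smul_apply, Matrix.sum_apply, Matrix.sub_apply, Matrix.add_apply,
    trace_mul_single, transpose_single, trace_single, single_eq, smul_eq_mul, mul_one,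
    MulOpposite.op_one, one_smul] using projection_single

theorem two_mul_card_smul_sum_sq (hE : IsFrobeniusOrthonormalBasis E) :
    (2 * Fintype.card n : R) • ∑ i, E i ^ 2 =
      (Fintype.card n ^ 2 + Fintype.card n - 2 : R) • 1 := by
  ext a d
  have sum_one_mul_one : ∑ b, (1 : Matrix n n R) a b * (1 : Matrix n n R) b d =
      (1 : Matrix n n R) a d := by
    rw [← mul_apply, mul_one]
  calc ((2 * Fintype.card n : R) • ∑ i, E i ^ 2) a d
      = ∑ b, (2 * Fintype.card n : R) * ∑ i, E i a b * E i b d := by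
        simp only [Matrix.smul_apply, Matrix.sum_apply, sq, mul_apply, smul_eq_mul,
          ← Finset.mul_sum]
        rw [Finset.sum_comm]
    _ = ∑ b, (Fintype.card n * (1 : Matrix n n R) a d +
          (Fintype.card n - 2) * ((1 : Matrix n n R) a b * (1 : Matrix n n R) b d)) := by
        refine Finset.sum_congr rfl fun b _ => ?_
        rw [hE.two_mul_card_mul_sum_apply_mul_apply, one_apply_eq]
        ring
    _ = ((Fintype.card n ^ 2 + Fintype.card n - 2 : R) • (1 : Matrix n n R)) a d := by
        rw [Finset.sum_add_distrib, ← Finset.mul_sum, ← Finset.mul_sum, sum_one_mul_one,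
          Finset.sum_const, Finset.card_univ, nsmul_eq_mul, Matrix.smul_apply, smul_eq_mul]
        ring

end IsFrobeniusOrthonormalBasis

end OrthonormalBasis

section AdjugateFinThree

variable {R : Type*} [CommRing R] (M : Matrix (Fin 3) (Fin 3) R)

theorem two_smul_adjugate_fin_three :
    (2 : R) • M.adjugate =
      (2 : R) • (M ^ 2 - M.trace • M) + (M.trace ^ 2 - (M ^ 2).trace) • 1 := by
  ext i j
  fin_cases i <;> fin_cases j <;>
    simp [adjugate_fin_three, trace_fin_three, sq, mul_apply, Fin.sum_univ_three] <;> ring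

end AdjugateFinThree

theorem cartan_munzner_cubic_is_harmonic_general {K : Type*} [Field K] (h6 : (6 : K) ≠ 0)
    {E : Fin 5 → Matrix (Fin 3) (Fin 3) K}
    (hsymm : ∀ i, (E i)ᵀ = E i) (htr : ∀ i, (E i).trace = 0)
    (horth : ∀ i j, ((E i)ᵀ * E j).trace = if i = j then 1 else 0) :
    ∑ i, (E i).adjugate = -(5 / 6 : K) • 1 := by
  have hE : IsFrobeniusOrthonormalBasis E := .of_card_add_one hsymm htr horth rfl
  have two_ne_zero : (2 : K) ≠ 0 := fun h => h6 (by linear_combination 3 * h)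
  have three_ne_zero : (3 : K) ≠ 0 := fun h => h6 (by linear_combination 2 * h)
  have adjugate_eq (i : Fin 5) : (E i).adjugate = E i ^ 2 - (1 / 2 : K) • 1 := by
    rw [← smul_right_inj two_ne_zero, two_smul_adjugate_fin_three, htr, hE.trace_sq]
    match_scalars <;> field_simp <;> norm_num
  have sum_sq : ∑ i, E i ^ 2 = (5 / 3 : K) • 1 := by
    have two_mul_three_ne_zero : 2 * (Fintype.card (Fin 3) : K) ≠ 0 := by
      simp [two_ne_zero, three_ne_zero]
    rw [← smul_right_inj two_mul_three_ne_zero, hE.two_mul_card_smul_sum_sq, smul_smul,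
      Fintype.card_fin]
    congr 1
    field_simp
    norm_num
  calc ∑ i, (E i).adjugate = ∑ i, E i ^ 2 - 5 • (1 / 2 : K) • 1 := by
        simp only [adjugate_eq, Finset.sum_sub_distrib, Finset.sum_const, Finset.card_univ,
          Fintype.card_fin]
    _ = -(5 / 6 : K) • 1 := by
        rw [sum_sq]
        match_scalars
        field_simp
        norm_num

/-- The Cartan–Münzner cubic `F(A) = 3√6·det A` is harmonic on the 5-dimensional space
`V` of traceless symmetric real 3×3 matrices: for every orthonormal basis `E₁, …, E₅` of
`V` (with respect to the Frobenius inner product `⟪X, Y⟫ = trace (Xᵀ Y)`) and every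
`A ∈ V`, the Laplacian `Σᵢ D²F(A)[Eᵢ, Eᵢ] = 6√6 · Σᵢ trace (adjugate (Eᵢ) · A)`
vanishes. -/
theorem cartan_munzner_cubic_is_harmonic
    (E : Fin 5 → Matrix (Fin 3) (Fin 3) ℝ)
    (hsymm : ∀ i, (E i)ᵀ = E i) (htr : ∀ i, (E i).trace = 0)
    (horth : ∀ i j, ((E i)ᵀ * E j).trace = if i = j then 1 else 0)
    (A : Matrix (Fin 3) (Fin 3) ℝ) (hAsymm : Aᵀ = A) (hAtr : A.trace = 0) :
    ∑ i, ((E i).adjugate * A).trace = 0 := by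
  simp [← trace_sum, ← Finset.sum_mul,
    cartan_munzner_cubic_is_harmonic_general (by norm_num) hsymm htr horth, hAtr]
end

section
/- Let A be a real 3×3 symmetric matrix with trace A = 0 and trace(A·A) = 1. Then 54·(det A)² ≤ 1; equivalently, |3√6·det A| ≤ 1, so the restriction V of the Cartan–Münzner cubic F(A) = 3√6·det A to the unit sphere of the space of traceless symmetric 3×3 matrices takes values in [−1, 1]. -/
open Matrix

/-!
A symmetric real matrix has a characteristic polynomial that splits over `ℝ`, so the discriminant of
that polynomial, being the square of the product of the differences of the eigenvalues, is
nonnegative. For a traceless `3 × 3` matrix the characteristic polynomial is the depressed cubic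
`X³ + p X - det A` with `2 p = -tr (A²)`, whose discriminant `-4 p³ - 27 (det A)²` is half of
`(tr (A²))³ - 54 (det A)²`.
-/

section CharpolyFinThree

variable {R : Type*} [CommRing R]

theorem charpoly_fin_three_eq_toPoly (A : Matrix (Fin 3) (Fin 3) R) :
    A.charpoly = (Cubic.mk 1 (-A.trace) A.adjugate.trace (-A.det)).toPoly := by
  simp only [Cubic.toPoly, charpoly, det_fin_three, trace_fin_three, adjugate_fin_three,
    charmatrix_apply, diagonal_apply, Fin.reduceEq, if_true, if_false, of_apply, cons_val, map_add,
    map_sub, map_neg, map_mul, map_one]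
  ring

theorem two_mul_trace_adjugate_fin_three (A : Matrix (Fin 3) (Fin 3) R) :
    2 * A.adjugate.trace = A.trace ^ 2 - (A * A).trace := by
  simp only [adjugate_fin_three, trace_fin_three, mul_apply, Fin.sum_univ_three, of_apply,
    cons_val]
  ring

end CharpolyFinThree

section SplitOverOrderedField

variable {K : Type*} [Field K] [LinearOrder K] [IsStrictOrderedRing K]

theorem cubic_discr_nonneg_of_splits {P : Cubic K} (ha : P.a ≠ 0) (hP : P.toPoly.Splits) :
    0 ≤ P.discr := by
  obtain ⟨x, y, z, hroots⟩ :=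
    (Cubic.splits_iff_roots_eq_three (φ := RingHom.id K) ha).mp (by rwa [Polynomial.map_id])
  rw [← RingHom.id_apply P.discr, Cubic.discr_eq_prod_three_roots ha hroots]
  exact sq_nonneg _

theorem fifty_four_mul_det_sq_le_trace_mul_self_pow_three {A : Matrix (Fin 3) (Fin 3) K}
    (hA : A.charpoly.Splits) (htr : A.trace = 0) :
    54 * A.det ^ 2 ≤ (A * A).trace ^ 3 := by
  have hdiscr : 0 ≤ -4 * A.adjugate.trace ^ 3 - 27 * A.det ^ 2 := by
    have h := cubic_discr_nonneg_of_splits one_ne_zero (charpoly_fin_three_eq_toPoly A ▸ hA)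
    simpa [Cubic.discr, htr] using h
  have htrace : (A * A).trace = -2 * A.adjugate.trace := by
    linear_combination two_mul_trace_adjugate_fin_three A + A.trace * htr
  calc
    54 * A.det ^ 2 ≤ -8 * A.adjugate.trace ^ 3 := by linarith
    _ = (A * A).trace ^ 3 := by rw [htrace]; ring

end SplitOverOrderedField

theorem cartan_munzner_cubic_maps_sphere_into_Icc_general
    {A : Matrix (Fin 3) (Fin 3) ℝ} (hA : A.charpoly.Splits) (htr : A.trace = 0) :
    54 * A.det ^ 2 ≤ (A * A).trace ^ 3 ∧
      |3 * Real.sqrt 6 * A.det| ≤ Real.sqrt ((A * A).trace ^ 3) := by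
  have hdet := fifty_four_mul_det_sq_le_trace_mul_self_pow_three hA htr
  refine ⟨hdet, Real.abs_le_sqrt ?_⟩
  calc
    (3 * Real.sqrt 6 * A.det) ^ 2 = 9 * Real.sqrt 6 ^ 2 * A.det ^ 2 := by ring
    _ = 54 * A.det ^ 2 := by rw [Real.sq_sqrt (by norm_num)]; ring
    _ ≤ (A * A).trace ^ 3 := hdet

/-- For a traceless symmetric real 3×3 matrix of unit Frobenius norm one has
`54 (det A)² ≤ 1`, i.e. `|3√6 · det A| ≤ 1`: the restriction of the Cartan–Münzner cubic
`F(A) = 3√6 · det A` to the unit sphere `S⁴` of traceless symmetric matrices takes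
values in `[−1, 1]`. -/
theorem cartan_munzner_cubic_maps_sphere_into_Icc
    (A : Matrix (Fin 3) (Fin 3) ℝ) (hsymm : Aᵀ = A) (htr : A.trace = 0)
    (hnorm : (A * A).trace = 1) :
    54 * A.det ^ 2 ≤ 1 ∧ |3 * Real.sqrt 6 * A.det| ≤ 1 := by
  have hA : A.IsHermitian := (conjTranspose_eq_transpose_of_trivial A).trans hsymm
  simpa only [hnorm, one_pow, Real.sqrt_one] using
    cartan_munzner_cubic_maps_sphere_into_Icc_general hA.splits_charpoly htr
end

section
/- For every unit vector u ∈ ℝ³, the matrix A_u = √(3/2)·(u uᵀ − (1/3)·1) is symmetric, has trace 0, satisfies trace(A_u·A_u) = 1, and satisfies 3√6·det(A_u) = 1. Hence the Veronese surface {A_u : ‖u‖ = 1} lies in the level set V = 1 of the restriction of the Cartan–Münzner cubic F(A) = 3√6·det A to the unit sphere of traceless symmetric 3×3 matrices. -/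
/-!
Write `P = u uᵀ` and `N` for the dimension. For a unit vector, `P` is a projection of rank one, so
`tr (P - 1 / N) = 0` and `tr ((P - 1 / N) ^ 2) = (N - 1) / N`, which is what the factor
`√(N / (N - 1))` normalizes. The identity `√(N (N - 1)) • A_u = N P - 1` removes all fractions, and
the matrix determinant lemma gives `det (N P - 1) = (-1) ^ N (1 - N)`. For `N = 3` this is `2`,
while `√6 ^ 3 = 2 * (3 √6)`.
-/

open Matrix

section RankOneShift

variable {n R : Type*} [DecidableEq n] [CommRing R]

theorem isSymm_vecMulVec_self_sub_smul_one (v : n → R) (c : R) :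
    (vecMulVec v v - c • (1 : Matrix n n R)).IsSymm := by
  simp only [IsSymm, transpose_sub, transpose_smul, transpose_one, transpose_vecMulVec]

variable [Fintype n]

theorem trace_vecMulVec_sub_smul_one (v w : n → R) (c : R) :
    (vecMulVec v w - c • (1 : Matrix n n R)).trace = v ⬝ᵥ w - c * Fintype.card n := by
  simp only [trace_sub, trace_vecMulVec, trace_smul, trace_one, smul_eq_mul]

theorem trace_vecMulVec_sub_smul_one_mul_self (v w : n → R) (c : R) :
    ((vecMulVec v w - c • (1 : Matrix n n R)) * (vecMulVec v w - c • 1)).trace =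
      (v ⬝ᵥ w) ^ 2 - 2 * c * (v ⬝ᵥ w) + c ^ 2 * Fintype.card n := by
  simp only [sub_mul, mul_sub, smul_mul_assoc, mul_smul_comm, one_mul, mul_one,
    vecMulVec_mul_vecMulVec, trace_sub, trace_smul, trace_vecMulVec, trace_one, smul_eq_mul,
    dotProduct_smul, dotProduct_comm w v]
  ring

theorem det_smul_vecMulVec_sub_one (v w : n → R) (c : R) :
    (c • vecMulVec v w - 1).det = (-1) ^ Fintype.card n * (1 - c * (v ⬝ᵥ w)) := by
  rw [← neg_sub, det_neg, ← smul_vecMulVec, sub_eq_add_neg, ← neg_vecMulVec,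
    vecMulVec_eq Unit, det_one_add_replicateCol_mul_replicateRow, dotProduct_neg,
    dotProduct_smul, dotProduct_comm w v, smul_eq_mul, sub_eq_add_neg]

end RankOneShift

theorem dotProduct_ofLp_self {n : Type*} [Fintype n] (u : EuclideanSpace ℝ n) :
    u.ofLp ⬝ᵥ u.ofLp = ‖u‖ ^ 2 := by
  simp only [EuclideanSpace.real_norm_sq_eq, dotProduct, ← sq]

section Veronese

variable {n : Type*} [Fintype n] [DecidableEq n]

/-- The matrix `A_u = √(N / (N - 1)) • (u uᵀ - 1 / N)`, where `N` is the number of coordinates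
of `u`. For a unit vector `u` it is a multiple of the traceless part of `u uᵀ`, scaled to
Frobenius norm `1`; on unit vectors of `ℝ³`, `u ↦ A_u` parametrizes the Veronese surface. For
`N ≤ 1` the scaling factor is `0`. -/
noncomputable def veroneseMatrix (u : EuclideanSpace ℝ n) : Matrix n n ℝ :=
  √(Fintype.card n / (Fintype.card n - 1)) •
    (vecMulVec u.ofLp u.ofLp - (1 / Fintype.card n : ℝ) • 1)

theorem isSymm_veroneseMatrix (u : EuclideanSpace ℝ n) : (veroneseMatrix u).IsSymm :=
  (isSymm_vecMulVec_self_sub_smul_one u.ofLp _).smul _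

theorem trace_veroneseMatrix {u : EuclideanSpace ℝ n} (hu : ‖u‖ = 1) :
    (veroneseMatrix u).trace = 0 := by
  cases isEmpty_or_nonempty n
  · exact trace_eq_zero_of_isEmpty _
  · rw [veroneseMatrix, trace_smul, trace_vecMulVec_sub_smul_one, dotProduct_ofLp_self, hu,
      one_div_mul_cancel (Nat.cast_ne_zero.mpr Fintype.card_ne_zero)]
    simp only [one_pow, sub_self, smul_zero]

variable [Nontrivial n]

theorem trace_veroneseMatrix_mul_self {u : EuclideanSpace ℝ n} (hu : ‖u‖ = 1) :
    (veroneseMatrix u * veroneseMatrix u).trace = 1 := by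
  have hcard : (1 : ℝ) < Fintype.card n := mod_cast Fintype.one_lt_card
  have hcard_sub : (Fintype.card n : ℝ) - 1 ≠ 0 := (sub_pos.mpr hcard).ne'
  have hscale : (0 : ℝ) ≤ Fintype.card n / (Fintype.card n - 1) :=
    div_nonneg (by linarith) (by linarith)
  rw [veroneseMatrix, smul_mul_smul_comm, Real.mul_self_sqrt hscale, trace_smul,
    trace_vecMulVec_sub_smul_one_mul_self, dotProduct_ofLp_self, hu, smul_eq_mul]
  field_simp
  ring

theorem sqrt_smul_veroneseMatrix (u : EuclideanSpace ℝ n) :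
    √(Fintype.card n * (Fintype.card n - 1)) • veroneseMatrix u =
      (Fintype.card n : ℝ) • vecMulVec u.ofLp u.ofLp - 1 := by
  have hcard : (1 : ℝ) < Fintype.card n := mod_cast Fintype.one_lt_card
  have hcard_sub : (Fintype.card n : ℝ) - 1 ≠ 0 := (sub_pos.mpr hcard).ne'
  have hsqrt : √(Fintype.card n * (Fintype.card n - 1)) *
      √(Fintype.card n / (Fintype.card n - 1)) = (Fintype.card n : ℝ) := by
    rw [← Real.sqrt_mul (mul_nonneg (by linarith) (by linarith)),
      mul_assoc, mul_div_cancel₀ _ hcard_sub, Real.sqrt_mul_self (by linarith)]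
  rw [veroneseMatrix, smul_smul, hsqrt, smul_sub, smul_smul,
    mul_one_div_cancel (by linarith), one_smul]

theorem sqrt_pow_mul_det_veroneseMatrix {u : EuclideanSpace ℝ n} (hu : ‖u‖ = 1) :
    √(Fintype.card n * (Fintype.card n - 1)) ^ Fintype.card n * (veroneseMatrix u).det =
      (-1) ^ Fintype.card n * (1 - Fintype.card n) := by
  rw [← det_smul, sqrt_smul_veroneseMatrix, det_smul_vecMulVec_sub_one, dotProduct_ofLp_self, hu,
    one_pow, mul_one]

theorem normalized_det_veroneseMatrix {u : EuclideanSpace ℝ n} (hu : ‖u‖ = 1) :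
    √(Fintype.card n * (Fintype.card n - 1)) ^ Fintype.card n /
      ((-1) ^ Fintype.card n * (1 - Fintype.card n)) * (veroneseMatrix u).det = 1 := by
  have hcard : (1 : ℝ) < Fintype.card n := mod_cast Fintype.one_lt_card
  have hvalue : (-1 : ℝ) ^ Fintype.card n * (1 - Fintype.card n) ≠ 0 :=
    mul_ne_zero (pow_ne_zero _ (neg_ne_zero.mpr one_ne_zero)) (sub_neg.mpr hcard).ne
  rw [div_mul_eq_mul_div, sqrt_pow_mul_det_veroneseMatrix hu, div_self hvalue]

theorem veronese_surface_lies_in_top_level_set_general {u : EuclideanSpace ℝ n} (hu : ‖u‖ = 1) :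
    (veroneseMatrix u)ᵀ = veroneseMatrix u ∧ (veroneseMatrix u).trace = 0 ∧
      (veroneseMatrix u * veroneseMatrix u).trace = 1 ∧
      √(Fintype.card n * (Fintype.card n - 1)) ^ Fintype.card n /
        ((-1) ^ Fintype.card n * (1 - Fintype.card n)) * (veroneseMatrix u).det = 1 :=
  ⟨isSymm_veroneseMatrix u, trace_veroneseMatrix hu, trace_veroneseMatrix_mul_self hu,
    normalized_det_veroneseMatrix hu⟩

end Veronese

theorem veroneseMatrix_fin_three (u : EuclideanSpace ℝ (Fin 3)) :
    veroneseMatrix u = √(3 / 2) • (Matrix.of (fun i j => u i * u j) - (1 / 3 : ℝ) • 1) := by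
  have hratio : (3 : ℝ) / (3 - 1) = 3 / 2 := by norm_num
  rw [veroneseMatrix, Fintype.card_fin, Nat.cast_ofNat, hratio]
  rfl

theorem three_mul_sqrt_six_eq_div :
    3 * √6 = √(3 * (3 - 1)) ^ 3 / ((-1) ^ 3 * (1 - 3)) := by
  calc
    3 * √6 = √6 ^ 2 * √6 / 2 := by rw [Real.sq_sqrt (by norm_num)]; ring
    _ = √6 ^ 3 / 2 := by rw [← pow_succ]
    _ = √(3 * (3 - 1)) ^ 3 / ((-1) ^ 3 * (1 - 3)) := by norm_num

/-- For every unit vector `u ∈ ℝ³`, the matrix `A_u = √(3/2)·(u uᵀ − (1/3)·1)` is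
symmetric, traceless, has unit Frobenius norm, and satisfies `3√6 · det A_u = 1`: the
Veronese surface lies in the level set `V = 1` of the Cartan–Münzner cubic
`F(A) = 3√6 · det A` on the unit sphere of traceless symmetric 3×3 matrices. -/
theorem veronese_surface_lies_in_top_level_set
    (u : EuclideanSpace ℝ (Fin 3)) (hu : ‖u‖ = 1)
    (A : Matrix (Fin 3) (Fin 3) ℝ)
    (hA : A = Real.sqrt (3 / 2) •
      (Matrix.of (fun i j => u i * u j) - (1 / 3 : ℝ) • (1 : Matrix (Fin 3) (Fin 3) ℝ))) :
    Aᵀ = A ∧ A.trace = 0 ∧ (A * A).trace = 1 ∧ 3 * Real.sqrt 6 * A.det = 1 := by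
  obtain rfl : A = veroneseMatrix u := hA.trans (veroneseMatrix_fin_three u).symm
  simpa only [three_mul_sqrt_six_eq_div, Fintype.card_fin, Nat.cast_ofNat] using
    veronese_surface_lies_in_top_level_set_general hu
end

section
/- Let A be a real 3×3 symmetric matrix with trace A = 0 and trace(A·A) = 1. Then there exist t ∈ [0, π/3] and a real orthogonal 3×3 matrix Q with det Q = 1 such that A = Q · D(t) · Qᵀ, where D(t) = diag(√(2/3)cos(t−π/3), √(2/3)cos(t+π/3), √(2/3)cos(t+π)). Thus the unit sphere S⁴ of traceless symmetric matrices is the union over t ∈ [0, π/3] of the SO(3)-conjugation orbits of the matrices D(t). -/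
open Matrix

/-!
Conjugating by a rotation diagonalizes a symmetric matrix with its eigenvalues `a ≥ b ≥ c` in
decreasing order. The decreasing triples with a given sum are a plane sector (the Weyl chamber of
type `A₂`) of opening `π / 3`: in the Cartesian coordinates `x = (a + b + c) / 3 - c` and
`y = (a - b) / √3` it is `0 ≤ y ≤ √3 x`, so the polar angle `t` lies in `[0, π / 3]`. The polar
radius is determined by the traces of `A` and `A * A`, and rewriting `a`, `b`, `c` in
polar coordinates gives the three cosines.
-/

section Conjugation

variable {l m n R : Type*} [Fintype n]

theorem trace_mul_mul_transpose [Fintype m] [DecidableEq n] [CommSemiring R] {Q : Matrix m n R}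
    (hQ : Qᵀ * Q = 1) (M : Matrix n n R) : (Q * M * Qᵀ).trace = M.trace := by
  rw [trace_mul_cycle, hQ, Matrix.one_mul]

theorem mul_mul_transpose_mul_mul_mul_transpose [Fintype m] [DecidableEq n] [Semiring R]
    {Q : Matrix m n R} (hQ : Qᵀ * Q = 1) (M N : Matrix n n R) :
    Q * M * Qᵀ * (Q * N * Qᵀ) = Q * (M * N) * Qᵀ :=
  calc Q * M * Qᵀ * (Q * N * Qᵀ) = Q * M * (Qᵀ * Q) * N * Qᵀ := by simp only [Matrix.mul_assoc]
    _ = Q * (M * N) * Qᵀ := by rw [hQ, Matrix.mul_one, Matrix.mul_assoc Q M N]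

theorem submatrix_mul_diagonal_comp_mul_transpose [Fintype l] [DecidableEq l] [DecidableEq n]
    [NonUnitalNonAssocSemiring R] (Q : Matrix m n R) (d : n → R) (e : l ≃ n) :
    Q.submatrix id e * diagonal (d ∘ e) * (Q.submatrix id e)ᵀ = Q * diagonal d * Qᵀ := by
  rw [← submatrix_diagonal_equiv, transpose_submatrix, submatrix_mul_equiv, submatrix_mul_equiv,
    submatrix_id_id]

end Conjugation

section Orthogonal

variable {n R : Type*} [Fintype n] [DecidableEq n] [CommRing R]

theorem submatrix_id_mem_orthogonalGroup {Q : Matrix n n R} (hQ : Q ∈ orthogonalGroup n R)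
    (σ : Equiv.Perm n) : Q.submatrix id σ ∈ orthogonalGroup n R := by
  rw [mem_orthogonalGroup_iff] at hQ ⊢
  rw [transpose_submatrix, submatrix_mul_equiv, hQ, submatrix_id_id]

theorem det_mul_self_of_mem_orthogonalGroup {Q : Matrix n n R} (hQ : Q ∈ orthogonalGroup n R) :
    Q.det * Q.det = 1 := by
  simpa only [det_mul, det_transpose, det_one] using
    congrArg det ((mem_orthogonalGroup_iff n R).mp hQ)

theorem diagonal_mem_orthogonalGroup {ε : n → R} (hε : ε * ε = 1) :
    diagonal ε ∈ orthogonalGroup n R := by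
  rw [mem_orthogonalGroup_iff, diagonal_transpose, diagonal_mul_diagonal]
  exact (congrArg diagonal hε).trans diagonal_one

-- Scaling one column by `det Q = ±1` corrects the determinant.
theorem exists_mem_specialOrthogonalGroup_mul_diagonal_mul_transpose_eq {Q : Matrix n n R}
    (hQ : Q ∈ orthogonalGroup n R) :
    ∃ P ∈ specialOrthogonalGroup n R, ∀ d : n → R,
      P * diagonal d * Pᵀ = Q * diagonal d * Qᵀ := by
  have hdet := det_mul_self_of_mem_orthogonalGroup hQ
  cases isEmpty_or_nonempty n with
  | inl _ => exact ⟨Q, mem_specialOrthogonalGroup_iff.mpr ⟨hQ, det_isEmpty⟩, fun _ ↦ rfl⟩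
  | inr hn =>
    obtain ⟨i⟩ := hn
    set ε : n → R := Pi.mulSingle i Q.det
    have hε : ε * ε = 1 := by rw [← Pi.mulSingle_mul, hdet, Pi.mulSingle_one]
    refine ⟨Q * diagonal ε, mem_specialOrthogonalGroup_iff.mpr
      ⟨mul_mem hQ (diagonal_mem_orthogonalGroup hε), ?_⟩, fun d ↦ ?_⟩
    · rw [det_mul, det_diagonal, Fintype.prod_pi_mulSingle', hdet]
    · have hconj : diagonal ε * diagonal d * diagonal ε = diagonal d := by
        have hεd : ε * d * ε = d := by rw [mul_right_comm, hε, one_mul]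
        rw [diagonal_mul_diagonal, diagonal_mul_diagonal]
        exact congrArg diagonal hεd
      calc Q * diagonal ε * diagonal d * (Q * diagonal ε)ᵀ
          = Q * (diagonal ε * diagonal d * diagonal ε) * Qᵀ := by
            simp only [transpose_mul, diagonal_transpose, Matrix.mul_assoc]
        _ = Q * diagonal d * Qᵀ := by rw [hconj]

end Orthogonal

section Spectral

theorem exists_orthogonal_diagonalization {n : Type*} [Fintype n] [DecidableEq n]
    {A : Matrix n n ℝ} (hA : A.IsSymm) :
    ∃ Q ∈ orthogonalGroup n ℝ, ∃ d : n → ℝ, A = Q * diagonal d * Qᵀ := by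
  have hA' : A.IsHermitian := (conjTranspose_eq_transpose_of_trivial A).trans hA
  refine ⟨hA'.eigenvectorUnitary, hA'.eigenvectorUnitary.2, hA'.eigenvalues, ?_⟩
  have hspec := hA'.spectral_theorem
  rwa [Unitary.conjStarAlgAut_apply, star_eq_conjTranspose,
    conjTranspose_eq_transpose_of_trivial] at hspec

theorem exists_perm_antitone_comp {α : Type*} [LinearOrder α] {n : ℕ} (f : Fin n → α) :
    ∃ σ : Equiv.Perm (Fin n), Antitone (f ∘ σ) :=
  ⟨Tuple.sort (OrderDual.toDual ∘ f), Tuple.monotone_sort (OrderDual.toDual ∘ f)⟩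

theorem exists_specialOrthogonal_antitone_diagonalization {n : ℕ} {A : Matrix (Fin n) (Fin n) ℝ}
    (hA : A.IsSymm) :
    ∃ Q ∈ specialOrthogonalGroup (Fin n) ℝ, ∃ d : Fin n → ℝ,
      Antitone d ∧ A = Q * diagonal d * Qᵀ := by
  obtain ⟨Q, hQ, d, hAd⟩ := exists_orthogonal_diagonalization hA
  obtain ⟨σ, hσ⟩ := exists_perm_antitone_comp d
  obtain ⟨P, hP, hPQ⟩ := exists_mem_specialOrthogonalGroup_mul_diagonal_mul_transpose_eq
    (submatrix_id_mem_orthogonalGroup hQ σ)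
  exact ⟨P, hP, d ∘ σ, hσ, by rw [hPQ, submatrix_mul_diagonal_comp_mul_transpose, hAd]⟩

end Spectral

section Polar

open Real

theorem arg_le_of_im_mul_cos_le_re_mul_sin {z : ℂ} {θ : ℝ} (hθ : 0 < θ)
    (hz : z.im * cos θ ≤ z.re * sin θ) : z.arg ≤ θ := by
  rcases eq_or_ne z 0 with rfl | hz0
  · simpa only [Complex.arg_zero] using hθ.le
  by_contra! hlt
  have hsin : sin (θ - z.arg) < 0 :=
    sin_neg_of_neg_of_neg_pi_lt (sub_neg.mpr hlt) (by linarith [z.arg_le_pi])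
  have hpolar : ‖z‖ * sin (θ - z.arg) = z.re * sin θ - z.im * cos θ := by
    rw [sin_sub, ← Complex.norm_mul_cos_arg, ← Complex.norm_mul_sin_arg]
    ring
  linarith [mul_neg_of_pos_of_neg (norm_pos_iff.mpr hz0) hsin]

theorem exists_mem_Icc_polar_of_mem_sector {x y θ : ℝ} (hθ : 0 < θ) (hy : 0 ≤ y)
    (hxy : y * cos θ ≤ x * sin θ) :
    ∃ t ∈ Set.Icc 0 θ, x = √(x ^ 2 + y ^ 2) * cos t ∧ y = √(x ^ 2 + y ^ 2) * sin t := by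
  let z : ℂ := ⟨x, y⟩
  have hnorm : ‖z‖ = √(x ^ 2 + y ^ 2) := Complex.norm_eq_sqrt_sq_add_sq z
  refine ⟨z.arg, ⟨Complex.arg_nonneg_iff.mpr hy, arg_le_of_im_mul_cos_le_re_mul_sin hθ hxy⟩, ?_, ?_⟩
  · rw [← hnorm, Complex.norm_mul_cos_arg]
  · rw [← hnorm, Complex.norm_mul_sin_arg]

theorem exists_mem_Icc_eq_cos_of_antitone {d : Fin 3 → ℝ} (hd : Antitone d) {p q : ℝ}
    (hp : ∑ i, d i = p) (hq : ∑ i, d i ^ 2 = q) :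
    ∃ t ∈ Set.Icc 0 (π / 3), d =
      ![p / 3 + √(2 / 3 * (q - p ^ 2 / 3)) * cos (t - π / 3),
        p / 3 + √(2 / 3 * (q - p ^ 2 / 3)) * cos (t + π / 3),
        p / 3 + √(2 / 3 * (q - p ^ 2 / 3)) * cos (t + π)] := by
  rw [Fin.sum_univ_three] at hp hq
  have h01 : d 1 ≤ d 0 := hd (by decide)
  have h12 : d 2 ≤ d 1 := hd (by decide)
  have h3 : √3 * √3 = 3 := mul_self_sqrt (by norm_num)
  obtain ⟨x, hx⟩ : ∃ x, p / 3 - d 2 = x := ⟨_, rfl⟩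
  obtain ⟨y, hy⟩ : ∃ y, d 0 - d 1 = √3 * y := ⟨(d 0 - d 1) / √3, by field_simp⟩
  have hy0 : 0 ≤ y := nonneg_of_mul_nonneg_right (hy ▸ sub_nonneg.mpr h01) (by positivity)
  have hsector : y * cos (π / 3) ≤ x * sin (π / 3) := by
    have hgap : x * sin (π / 3) - y * cos (π / 3) = √3 / 3 * (d 1 - d 2) := by
      rw [cos_pi_div_three, sin_pi_div_three]
      linear_combination (-√3 / 2) * hx - (√3 / 6) * hp + (√3 / 6) * hy + (y / 6) * h3
    have hgap_nonneg : 0 ≤ √3 / 3 * (d 1 - d 2) :=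
      mul_nonneg (by positivity) (sub_nonneg.mpr h12)
    linarith
  have hradius : x ^ 2 + y ^ 2 = 2 / 3 * (q - p ^ 2 / 3) := by
    have hy_sq : y ^ 2 = (d 0 - d 1) ^ 2 / 3 := by
      rw [hy]
      linear_combination (-y ^ 2 / 3) * h3
    rw [hy_sq, ← hx, ← hp, ← hq]
    ring
  obtain ⟨t, ht, hxt, hyt⟩ := exists_mem_Icc_polar_of_mem_sector (by positivity) hy0 hsector
  rw [hradius] at hxt hyt
  refine ⟨t, ht, ?_⟩
  rw [cos_sub, cos_add, cos_add_pi, cos_pi_div_three, sin_pi_div_three]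
  ext i
  fin_cases i <;> dsimp
  · linear_combination (hx + hxt + √3 * hyt + hy + hp) / 2
  · linear_combination (hx + hxt - √3 * hyt - hy + hp) / 2
  · linear_combination -hx - hxt

end Polar

theorem sphere_of_traceless_symmetric_is_union_of_orbits_general
    (A : Matrix (Fin 3) (Fin 3) ℝ) (hsymm : Aᵀ = A) :
    ∃ t ∈ Set.Icc (0 : ℝ) (Real.pi / 3), ∃ Q : Matrix (Fin 3) (Fin 3) ℝ,
      Qᵀ * Q = 1 ∧ Q.det = 1 ∧
      A = Q * Matrix.diagonal
        ![A.trace / 3 + √(2 / 3 * ((A * A).trace - A.trace ^ 2 / 3)) * Real.cos (t - Real.pi / 3),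
          A.trace / 3 + √(2 / 3 * ((A * A).trace - A.trace ^ 2 / 3)) * Real.cos (t + Real.pi / 3),
          A.trace / 3 + √(2 / 3 * ((A * A).trace - A.trace ^ 2 / 3)) * Real.cos (t + Real.pi)]
        * Qᵀ := by
  obtain ⟨Q, hQ, d, hd, hA⟩ := exists_specialOrthogonal_antitone_diagonalization hsymm
  obtain ⟨hQorth, hQdet⟩ := mem_specialOrthogonalGroup_iff.mp hQ
  have hQQ : Qᵀ * Q = 1 := (mem_orthogonalGroup_iff' (Fin 3) ℝ).mp hQorth
  have htrace : ∑ i, d i = A.trace := by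
    rw [hA, trace_mul_mul_transpose hQQ, trace_diagonal]
  have htrace_sq : ∑ i, d i ^ 2 = (A * A).trace := by
    rw [hA, mul_mul_transpose_mul_mul_mul_transpose hQQ, trace_mul_mul_transpose hQQ,
      diagonal_mul_diagonal, trace_diagonal]
    simp only [sq]
  obtain ⟨t, ht, hdt⟩ := exists_mem_Icc_eq_cos_of_antitone hd htrace htrace_sq
  exact ⟨t, ht, Q, hQQ, hQdet, hdt ▸ hA⟩

/-- Every traceless symmetric real 3×3 matrix of unit Frobenius norm is conjugate, by a
special orthogonal matrix, to `D(t) = diag(√(2/3)cos(t−π/3), √(2/3)cos(t+π/3),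
√(2/3)cos(t+π))` for some `t ∈ [0, π/3]`: the unit sphere `S⁴` of traceless symmetric
matrices is the union of the `SO(3)`-conjugation orbits of the matrices `D(t)`. -/
theorem sphere_of_traceless_symmetric_is_union_of_orbits
    (A : Matrix (Fin 3) (Fin 3) ℝ) (hsymm : Aᵀ = A) (htr : A.trace = 0)
    (hnorm : (A * A).trace = 1) :
    ∃ t ∈ Set.Icc (0 : ℝ) (Real.pi / 3), ∃ Q : Matrix (Fin 3) (Fin 3) ℝ,
      Qᵀ * Q = 1 ∧ Q.det = 1 ∧
      A = Q * Matrix.diagonal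
        ![Real.sqrt (2 / 3) * Real.cos (t - Real.pi / 3),
          Real.sqrt (2 / 3) * Real.cos (t + Real.pi / 3),
          Real.sqrt (2 / 3) * Real.cos (t + Real.pi)] * Qᵀ := by
  simpa only [htr, hnorm, zero_div, zero_add, zero_pow two_ne_zero, sub_zero, mul_one] using
    sphere_of_traceless_symmetric_is_union_of_orbits_general A hsymm
end

section
/- Let P be a real symmetric 3×3 matrix with three distinct eigenvalues, let t ∈ (0, π/3), and let D(t) = diag(√(2/3)cos(t−π/3), √(2/3)cos(t+π/3), √(2/3)cos(t+π)). Then the set { A : (∃ orthogonal Q with det Q = 1, A = Q·D(t)·Qᵀ) and A·P = P·A } has exactly 6 elements. (Since A ∈ M_t is a critical point of the height function ℓ_P(A) = trace(P·A) exactly when A·P = P·A, the height function ℓ_P has exactly 6 = 2g critical points on Cartan's isoparametric hypersurface M_t, exhibiting its tightness.) -/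
open Matrix

/-!
Conjugating by an orthonormal eigenbasis of `P`, we may take `P` diagonal. A matrix commuting with
a diagonal matrix with distinct entries is diagonal, and a diagonal matrix in the conjugation orbit
of `diagonal d` has the same characteristic polynomial, so its entries are a permutation of `d`.
Conversely permutation matrices realise every permutation, and their determinant can be corrected
to `1` by a diagonal unitary factor, which commutes with `diagonal d`. For distinct entries `d` this
gives `n!` critical points, and `3! = 6`.
-/

open Equiv (Perm)
open scoped Nat

theorem exists_perm_comp_eq_of_map_univ_eq {ι α : Type*} [Fintype ι] {f g : ι → α}
    (h : Finset.univ.val.map f = Finset.univ.val.map g) : ∃ σ : Perm ι, f = g ∘ σ := by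
  classical
  have card_fiber (k : ι → α) (c : α) :
      Fintype.card {i // k i = c} = (Finset.univ.val.map k).count c := by
    rw [Multiset.count_map, Fintype.card_subtype, Finset.card_def, Finset.filter_val]
    simp only [eq_comm]
  have fiberEquiv (c : α) : Nonempty ({i // f i = c} ≃ {i // g i = c}) :=
    Fintype.card_eq.mp (by rw [card_fiber, card_fiber, h])
  exact ⟨Equiv.ofFiberEquiv fun c ↦ (fiberEquiv c).some,
    funext fun i ↦ (Equiv.ofFiberEquiv_map _ i).symm⟩

theorem ncard_range_diagonal_comp_perm {n R : Type*} [Fintype n] [DecidableEq n] [Zero R]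
    {d : n → R} (hd : Function.Injective d) :
    (Set.range fun σ : Perm n ↦ diagonal (d ∘ σ)).ncard = (Fintype.card n)! := by
  have hinj : Function.Injective fun σ : Perm n ↦ diagonal (d ∘ σ) := fun σ τ h ↦
    Equiv.coe_fn_injective (hd.comp_left (diagonal_injective h))
  rw [Set.ncard_range_of_injective hinj, Nat.card_eq_fintype_card, Fintype.card_perm]

section Diagonal

variable {n R : Type*} [Fintype n] [DecidableEq n] [CommRing R]

theorem roots_charpoly_diagonal [IsDomain R] (d : n → R) :
    (diagonal d).charpoly.roots = Finset.univ.val.map d := by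
  rw [charpoly_diagonal, Polynomial.roots_prod _ _
    (Finset.prod_ne_zero_iff.mpr fun i _ ↦ Polynomial.X_sub_C_ne_zero (d i))]
  simp

theorem exists_perm_of_charpoly_diagonal_eq [IsDomain R] {a d : n → R}
    (h : (diagonal a).charpoly = (diagonal d).charpoly) : ∃ σ : Perm n, a = d ∘ σ :=
  exists_perm_comp_eq_of_map_univ_eq <| by
    rw [← roots_charpoly_diagonal, h, roots_charpoly_diagonal]

theorem commute_diagonal_iff_isDiag [NoZeroDivisors R] {l : n → R} (hl : Function.Injective l)
    {A : Matrix n n R} : Commute A (diagonal l) ↔ A.IsDiag := by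
  refine ⟨fun hA i j hij ↦ ?_, fun hA ↦ hA.diagonal_diag ▸ commute_diagonal _ _⟩
  have hentry : A i j * l j = l i * A i j := by
    rw [← mul_diagonal, hA.eq, diagonal_mul]
  have hprod : (l i - l j) * A i j = 0 := by linear_combination -hentry
  exact (mul_eq_zero.mp hprod).resolve_left (sub_ne_zero.mpr (hl.ne hij))

end Diagonal

section Unitary

variable {n R : Type*} [Fintype n] [DecidableEq n] [CommRing R] [StarRing R]

theorem permMatrix_mem_unitaryGroup (σ : Perm n) : σ.permMatrix R ∈ unitaryGroup n R := by
  rw [mem_unitaryGroup_iff, star_eq_conjTranspose, conjTranspose_permMatrix, ← permMatrix_mul,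
    inv_mul_cancel, permMatrix_one]

theorem permMatrix_mul_diagonal_mul_star (σ : Perm n) (d : n → R) :
    σ.permMatrix R * diagonal d * star (σ.permMatrix R) = diagonal (d ∘ σ) := by
  rw [star_eq_conjTranspose, conjTranspose_permMatrix, PEquiv.toMatrix_toPEquiv_mul,
    PEquiv.mul_toMatrix_toPEquiv, submatrix_submatrix]
  exact submatrix_diagonal_equiv d σ

theorem diagonal_mem_unitaryGroup {e : n → R} (he : ∀ i, e i ∈ unitary R) :
    diagonal e ∈ unitaryGroup n R := by
  rw [mem_unitaryGroup_iff, star_eq_conjTranspose, diagonal_conjTranspose, diagonal_mul_diagonal,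
    ← diagonal_one]
  exact congrArg diagonal (funext fun i ↦ Unitary.mul_star_self_of_mem (he i))

theorem exists_diagonal_mem_unitaryGroup_det_eq [Nonempty n] {c : R} (hc : c ∈ unitary R) :
    ∃ e : n → R, diagonal e ∈ unitaryGroup n R ∧ (diagonal e).det = c := by
  let i₀ : n := Classical.arbitrary n
  refine ⟨Function.update 1 i₀ c, diagonal_mem_unitaryGroup fun i ↦ ?_, ?_⟩
  · obtain rfl | hi := eq_or_ne i i₀
    · rwa [Function.update_self]
    · rw [Function.update_of_ne hi]
      exact one_mem _
  · rw [det_diagonal, Finset.prod_update_of_mem (Finset.mem_univ i₀)]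
    simp

theorem exists_mem_specialUnitaryGroup_conj_diagonal_eq {U : Matrix n n R}
    (hU : U ∈ unitaryGroup n R) (d : n → R) :
    ∃ Q ∈ specialUnitaryGroup n R, Q * diagonal d * star Q = U * diagonal d * star U := by
  cases isEmpty_or_nonempty n
  · exact ⟨U, ⟨hU, det_isEmpty⟩, rfl⟩
  obtain ⟨e, he, hdet⟩ := exists_diagonal_mem_unitaryGroup_det_eq (n := n)
    (Unitary.star_mem (det_of_mem_unitary hU))
  refine ⟨U * diagonal e, mem_specialUnitaryGroup_iff.mpr ⟨mul_mem hU he, ?_⟩, ?_⟩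
  · rw [det_mul, hdet, Unitary.mul_star_self_of_mem (det_of_mem_unitary hU)]
  · calc U * diagonal e * diagonal d * star (U * diagonal e)
        = U * (diagonal e * diagonal d) * star (diagonal e) * star U := by
          simp only [star_mul, Matrix.mul_assoc]
      _ = U * diagonal d * (diagonal e * star (diagonal e)) * star U := by
          rw [(commute_diagonal e d).eq]
          simp only [Matrix.mul_assoc]
      _ = U * diagonal d * star U := by
          rw [mem_unitaryGroup_iff.mp he, Matrix.mul_one]

/-- The orbit of `D` under conjugation by the special unitary group; when the star of `R` is
trivial, this is the `SO(n)`-conjugation orbit. Cartan's hypersurface `M_t` is the orbit of `D(t)`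
over `ℝ`. -/
def specialUnitaryOrbit (D : Matrix n n R) : Set (Matrix n n R) :=
  {A | ∃ Q ∈ specialUnitaryGroup n R, A = Q * D * star Q}

theorem mem_specialUnitaryOrbit_diagonal_iff {A : Matrix n n R} {d : n → R} :
    A ∈ specialUnitaryOrbit (diagonal d) ↔
      ∃ U : unitaryGroup n R, A = Unitary.conjStarAlgAut R _ U (diagonal d) := by
  constructor
  · rintro ⟨Q, hQ, rfl⟩
    exact ⟨⟨Q, hQ.1⟩, rfl⟩
  · rintro ⟨U, rfl⟩
    obtain ⟨Q, hQ, hQU⟩ := exists_mem_specialUnitaryGroup_conj_diagonal_eq U.2 d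
    exact ⟨Q, hQ, hQU.symm⟩

theorem conjStarAlgAut_mem_specialUnitaryOrbit_diagonal_iff (U : unitaryGroup n R)
    {A : Matrix n n R} {d : n → R} :
    Unitary.conjStarAlgAut R _ U A ∈ specialUnitaryOrbit (diagonal d) ↔
      A ∈ specialUnitaryOrbit (diagonal d) := by
  have conj_mem (V : unitaryGroup n R) {B : Matrix n n R}
      (hB : B ∈ specialUnitaryOrbit (diagonal d)) :
      Unitary.conjStarAlgAut R _ V B ∈ specialUnitaryOrbit (diagonal d) := by
    obtain ⟨W, rfl⟩ := mem_specialUnitaryOrbit_diagonal_iff.mp hB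
    exact mem_specialUnitaryOrbit_diagonal_iff.mpr
      ⟨V * W, (Unitary.conjStarAlgAut_mul_apply V W _).symm⟩
  refine ⟨fun hA ↦ ?_, conj_mem U⟩
  simpa only [← Unitary.conjStarAlgAut_symm, StarAlgEquiv.symm_apply_apply]
    using conj_mem (star U) hA

theorem diagonal_mem_specialUnitaryOrbit_diagonal_iff [IsDomain R] {a d : n → R} :
    diagonal a ∈ specialUnitaryOrbit (diagonal d) ↔ ∃ σ : Perm n, a = d ∘ σ := by
  rw [mem_specialUnitaryOrbit_diagonal_iff]
  constructor
  · rintro ⟨U, hU⟩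
    refine exists_perm_of_charpoly_diagonal_eq ?_
    rw [hU, Unitary.conjStarAlgAut_apply, charpoly_mul_comm, ← Matrix.mul_assoc,
      Unitary.coe_star_mul_self, Matrix.one_mul]
  · rintro ⟨σ, rfl⟩
    exact ⟨⟨σ.permMatrix R, permMatrix_mem_unitaryGroup σ⟩,
      (permMatrix_mul_diagonal_mul_star σ d).symm⟩

theorem specialUnitaryOrbit_diagonal_inter_setOf_commute_diagonal [IsDomain R] {l : n → R}
    (hl : Function.Injective l) (d : n → R) :
    specialUnitaryOrbit (diagonal d) ∩ {A | Commute A (diagonal l)} =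
      Set.range fun σ : Perm n ↦ diagonal (d ∘ σ) := by
  ext A
  simp only [Set.mem_inter_iff, Set.mem_ofPred_eq, commute_diagonal_iff_isDiag hl, Set.mem_range]
  constructor
  · rintro ⟨hA, hdiag⟩
    rw [← hdiag.diagonal_diag] at hA ⊢
    obtain ⟨σ, hσ⟩ := diagonal_mem_specialUnitaryOrbit_diagonal_iff.mp hA
    exact ⟨σ, congrArg diagonal hσ.symm⟩
  · rintro ⟨σ, rfl⟩
    exact ⟨diagonal_mem_specialUnitaryOrbit_diagonal_iff.mpr ⟨σ, rfl⟩, isDiag_diagonal _⟩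

theorem specialUnitaryOrbit_diagonal_inter_setOf_commute_conjStarAlgAut (U : unitaryGroup n R)
    (d : n → R) (P : Matrix n n R) :
    specialUnitaryOrbit (diagonal d) ∩ {A | Commute A (Unitary.conjStarAlgAut R _ U P)} =
      Unitary.conjStarAlgAut R _ U '' (specialUnitaryOrbit (diagonal d) ∩ {A | Commute A P}) := by
  ext A
  obtain ⟨B, rfl⟩ := EquivLike.surjective (Unitary.conjStarAlgAut R _ U) A
  rw [(EquivLike.injective (Unitary.conjStarAlgAut R _ U)).mem_set_image]
  exact and_congr (conjStarAlgAut_mem_specialUnitaryOrbit_diagonal_iff U)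
    (commute_map_iff (EquivLike.injective (Unitary.conjStarAlgAut R _ U)))

end Unitary

theorem strictAnti_cartan_diagonal {r t : ℝ} (hr : 0 < r) (ht0 : 0 < t) (ht1 : t < Real.pi / 3) :
    StrictAnti ![r * Real.cos (t - Real.pi / 3), r * Real.cos (t + Real.pi / 3),
      r * Real.cos (t + Real.pi)] := by
  have h01 : Real.cos (t + Real.pi / 3) < Real.cos (t - Real.pi / 3) := by
    rw [← Real.cos_neg (t - Real.pi / 3)]
    exact Real.cos_lt_cos_of_nonneg_of_le_pi (by linarith) (by linarith) (by linarith)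
  have h12 : Real.cos (t + Real.pi) < Real.cos (t + Real.pi / 3) := by
    rw [Real.cos_add_pi, ← Real.cos_pi_sub]
    exact Real.cos_lt_cos_of_nonneg_of_le_pi (by linarith) (by linarith) (by linarith)
  rw [Fin.strictAnti_iff_succ_lt, Fin.forall_fin_two]
  exact ⟨mul_lt_mul_of_pos_left h01 hr, mul_lt_mul_of_pos_left h12 hr⟩

theorem height_function_has_six_critical_points_on_cartan_hypersurface_general
    {n 𝕜 : Type*} [Fintype n] [DecidableEq n] [RCLike 𝕜] {P : Matrix n n 𝕜} (hP : P.IsHermitian)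
    (hdist : Function.Injective hP.eigenvalues) {d : n → 𝕜} (hd : Function.Injective d) :
    (specialUnitaryOrbit (diagonal d) ∩ {A | Commute A P}).ncard = (Fintype.card n)! := by
  have hl : Function.Injective (RCLike.ofReal ∘ hP.eigenvalues : n → 𝕜) :=
    RCLike.ofReal_injective.comp hdist
  rw [hP.spectral_theorem, specialUnitaryOrbit_diagonal_inter_setOf_commute_conjStarAlgAut,
    specialUnitaryOrbit_diagonal_inter_setOf_commute_diagonal hl,
    Set.ncard_image_of_injective _ (EquivLike.injective _),
    ncard_range_diagonal_comp_perm hd]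

/-- Let `P` be a real symmetric 3×3 matrix with three distinct eigenvalues and let
`t ∈ (0, π/3)`. Then there are exactly `6 = 2g` matrices in Cartan's isoparametric
hypersurface `M_t` (the `SO(3)`-conjugation orbit of `D(t)`) that commute with `P`,
i.e. the height function `ℓ_P(A) = trace (P·A)` has exactly 6 critical points on `M_t`,
exhibiting its tightness. -/
theorem height_function_has_six_critical_points_on_cartan_hypersurface
    (P : Matrix (Fin 3) (Fin 3) ℝ) (hP : P.IsHermitian)
    (hdist : Function.Injective hP.eigenvalues)
    (t : ℝ) (ht0 : 0 < t) (ht1 : t < Real.pi / 3) :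
    Set.ncard {A : Matrix (Fin 3) (Fin 3) ℝ |
        (∃ Q : Matrix (Fin 3) (Fin 3) ℝ, Qᵀ * Q = 1 ∧ Q.det = 1 ∧
          A = Q * Matrix.diagonal
            ![Real.sqrt (2 / 3) * Real.cos (t - Real.pi / 3),
              Real.sqrt (2 / 3) * Real.cos (t + Real.pi / 3),
              Real.sqrt (2 / 3) * Real.cos (t + Real.pi)] * Qᵀ) ∧
        A * P = P * A} = 6 := by
  simpa [specialUnitaryOrbit, Set.inter_def, mem_specialUnitaryGroup_iff, mem_unitaryGroup_iff',
      star_eq_conjTranspose, and_assoc, commute_iff_eq, Nat.factorial] using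
    height_function_has_six_critical_points_on_cartan_hypersurface_general hP hdist
      (strictAnti_cartan_diagonal (by positivity : 0 < √(2 / 3 : ℝ)) ht0 ht1).injective
end

section
/- Let P be a real symmetric 3×3 matrix and consider the smooth function q(u) = ⟪P u, u⟫ on the unit sphere S² of ℝ³. Then a unit vector u is a critical point of q (i.e., the mfderiv of q on the sphere vanishes at u) if and only if P u = ⟪P u, u⟫·u, that is, u is a unit eigenvector of P. Moreover, if P has three distinct eigenvalues, the set of critical points of q on S² has exactly 6 elements. (Since the Veronese map u ↦ A_u identifies antipodes and satisfies trace(P·A_u) = √(3/2)·(q(u) − trace(P)/3), the height function ℓ_P has exactly 3 = g critical points on the Veronese surface, exhibiting the tightness of this focal submanifold.) -/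
open scoped RealInnerProductSpace Manifold

open Matrix

/-! The gradient of `q(x) = ⟪T x, x⟫` at `u` is `2 T u`, so `u` is critical on the sphere exactly
when `T u` is orthogonal to `uᗮ`, the tangent space at `u`; that is, when `T u` is a multiple of
`u`. If the eigenvalues are distinct, every eigenspace is a line, and each of these lines meets the
sphere in two antipodal points. -/

section Eigenbasis

variable {R M ι : Type*} [CommRing R] [NoZeroDivisors R] [AddCommGroup M] [Module R M]

theorem apply_mem_span_singleton_iff_exists_mem_span_singleton (b : Module.Basis ι R M)
    {T : M →ₗ[R] M} {μ : ι → R} (hT : ∀ i, T (b i) = μ i • b i) (hμ : Function.Injective μ)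
    {u : M} (hu : u ≠ 0) :
    T u ∈ R ∙ u ↔ ∃ i, u ∈ R ∙ b i := by
  simp only [Submodule.mem_span_singleton]
  constructor
  · rintro ⟨c, hc⟩
    have repr_apply (i : ι) : b.repr (T u) i = μ i * b.repr u i := by
      have : b.coord i ∘ₗ T = μ i • b.coord i := b.ext fun j => by
        rcases eq_or_ne j i with rfl | hij <;> simp [*]
      exact LinearMap.congr_fun this u
    have eigenvalue_eq {i : ι} (hi : b.repr u i ≠ 0) : μ i = c :=
      mul_right_cancel₀ hi (by rw [← repr_apply, ← hc]; simp)
    obtain ⟨i, hi⟩ : ∃ i, b.repr u i ≠ 0 := by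
      by_contra! h
      exact hu (b.ext_elem fun i => by simp [h i])
    have repr_eq_zero {j : ι} (hij : i ≠ j) : b.repr u j = 0 := by
      by_contra hj
      exact hij (hμ ((eigenvalue_eq hi).trans (eigenvalue_eq hj).symm))
    refine ⟨i, b.repr u i, b.ext_elem fun j => ?_⟩
    rcases eq_or_ne i j with rfl | hij
    · simp
    · simp [hij, repr_eq_zero hij]
  · rintro ⟨i, a, rfl⟩
    exact ⟨μ i, by rw [map_smul, hT, smul_comm]⟩

end Eigenbasis

section UnitVectors

theorem inner_smul_eq_self_iff_mem_span_singleton {𝕜 E : Type*} [RCLike 𝕜]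
    [NormedAddCommGroup E] [InnerProductSpace 𝕜 E] {u : E} (hu : ‖u‖ = 1) (v : E) :
    inner 𝕜 u v • u = v ↔ v ∈ 𝕜 ∙ u := by
  rw [← Submodule.starProjection_unit_singleton 𝕜 hu, Submodule.starProjection_eq_self_iff]

theorem mem_span_singleton_iff_exists_units_int_smul {E : Type*} [NormedAddCommGroup E]
    [NormedSpace ℝ E] {u v : E} (hu : ‖u‖ = 1) (hv : ‖v‖ = 1) :
    u ∈ ℝ ∙ v ↔ ∃ ε : ℤˣ, ε • v = u := by
  rw [Submodule.mem_span_singleton]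
  constructor
  · rintro ⟨a, rfl⟩
    have ha : |a| = 1 := by simpa [norm_smul, hv] using hu
    rcases eq_or_eq_neg_of_abs_eq ha with rfl | rfl
    · exact ⟨1, by simp⟩
    · exact ⟨-1, by simp⟩
  · rintro ⟨ε, rfl⟩
    exact ⟨(ε : ℤ), by rw [Int.cast_smul_eq_zsmul, Units.smul_def]⟩

end UnitVectors

section UnitEigenvectors

variable {E ι : Type*} [NormedAddCommGroup E] [InnerProductSpace ℝ E]

/-- The points `±v i` of the unit sphere determined by an orthonormal family `v`, with signs encoded
as units of `ℤ`. For an orthonormal eigenbasis with distinct eigenvalues, these enumerate the unit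
eigenvectors. -/
def signedPoint {v : ι → E} (hv : Orthonormal ℝ v) (p : ι × ℤˣ) : Metric.sphere (0 : E) 1 :=
  ⟨p.2 • v p.1, by simp [norm_units_zsmul, hv.1]⟩

theorem signedPoint_injective {v : ι → E} (hv : Orthonormal ℝ v) :
    Function.Injective (signedPoint hv) := by
  rintro ⟨i, ε⟩ ⟨j, δ⟩ h
  have hsmul : ((ε : ℤ) : ℝ) • v i = ((δ : ℤ) : ℝ) • v j := by
    simpa only [Int.cast_smul_eq_zsmul] using! congrArg Subtype.val h
  obtain rfl : i = j :=
    hv.linearIndependent.eq_of_smul_apply_eq_smul_apply _ _ _ _ (by simp) hsmul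
  have hsign : ε = δ :=
    Units.ext (Int.cast_injective (smul_left_injective ℝ (hv.ne_zero i) hsmul))
  rw [hsign]

variable [Fintype ι]

theorem setOf_apply_eq_inner_smul_eq_range_signedPoint (b : OrthonormalBasis ι ℝ E)
    {T : E →ₗ[ℝ] E} {μ : ι → ℝ} (hT : ∀ i, T (b i) = μ i • b i) (hμ : Function.Injective μ) :
    {u : Metric.sphere (0 : E) 1 | T u = ⟪T u, (u : E)⟫ • (u : E)} =
      Set.range (signedPoint b.orthonormal) := by
  ext u
  have hu : ‖(u : E)‖ = 1 := norm_eq_of_mem_sphere u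
  calc T u = ⟪T u, (u : E)⟫ • (u : E)
      ↔ T u ∈ ℝ ∙ (u : E) := by
        rw [eq_comm, real_inner_comm, inner_smul_eq_self_iff_mem_span_singleton hu]
    _ ↔ ∃ i, (u : E) ∈ ℝ ∙ b i := by
        simpa using apply_mem_span_singleton_iff_exists_mem_span_singleton b.toBasis
          (by simpa using hT) hμ (ne_zero_of_mem_unit_sphere u)
    _ ↔ ∃ i, ∃ ε : ℤˣ, ε • b i = (u : E) := by
        simp only [mem_span_singleton_iff_exists_units_int_smul hu (b.norm_eq_one _)]
    _ ↔ u ∈ Set.range (signedPoint b.orthonormal) := by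
        simp [signedPoint, Subtype.ext_iff]

theorem ncard_setOf_apply_eq_inner_smul (b : OrthonormalBasis ι ℝ E) {T : E →ₗ[ℝ] E}
    {μ : ι → ℝ} (hT : ∀ i, T (b i) = μ i • b i) (hμ : Function.Injective μ) :
    {u : Metric.sphere (0 : E) 1 | T u = ⟪T u, (u : E)⟫ • (u : E)}.ncard =
      2 * Fintype.card ι := by
  rw [setOf_apply_eq_inner_smul_eq_range_signedPoint b hT hμ,
    Set.ncard_range_of_injective (signedPoint_injective b.orthonormal)]
  simp [mul_comm]

end UnitEigenvectors

section CriticalPoints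

variable {E : Type*} [NormedAddCommGroup E] [InnerProductSpace ℝ E]
  {n : ℕ} [Fact (Module.finrank ℝ E = n + 1)]

theorem mfderiv_sphere_eq_zero_iff_orthogonal_le_ker {F : Type*} [NormedAddCommGroup F]
    [NormedSpace ℝ F] {f : E → F} {f' : E →L[ℝ] F} {u : Metric.sphere (0 : E) 1}
    (hf : HasFDerivAt f f' u) :
    mfderiv (𝓡 n) 𝓘(ℝ, F) (fun v : Metric.sphere (0 : E) 1 => f v) u = 0 ↔
      (ℝ ∙ (u : E))ᗮ ≤ f'.ker := by
  have hcoe : MDifferentiableAt (𝓡 n) 𝓘(ℝ, E) ((↑) : Metric.sphere (0 : E) 1 → E) u :=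
    (contMDiff_coe_sphere (m := 1) u).mdifferentiableAt one_ne_zero
  have hchain : mfderiv (𝓡 n) 𝓘(ℝ, F) (fun v : Metric.sphere (0 : E) 1 => f v) u =
      f'.comp (mvfderiv (𝓡 n) ((↑) : Metric.sphere (0 : E) 1 → E) u) :=
    (hf.hasMFDerivAt.comp u hcoe.hasMFDerivAt).mfderiv
  rw [hchain, ← range_mvfderiv_subtypeVal (n := n) u, LinearMap.range_le_ker_iff]
  exact ContinuousLinearMap.coe_inj.symm

theorem mfderiv_inner_apply_self_sphere_eq_zero_iff {T : E →ₗ[ℝ] E} (hT : T.IsSymmetric)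
    (u : Metric.sphere (0 : E) 1) :
    mfderiv (𝓡 n) 𝓘(ℝ, ℝ) (fun v : Metric.sphere (0 : E) 1 => ⟪T v, (v : E)⟫) u = 0 ↔
      T u = ⟪T u, (u : E)⟫ • (u : E) := by
  have : FiniteDimensional ℝ E := .of_fact_finrank_eq_succ n
  have hgrad : HasFDerivAt (fun x => ⟪T x, x⟫) (2 • innerSL ℝ (T u)) (u : E) :=
    (LinearMap.IsSymmetric.hasStrictFDerivAt_reApplyInnerSelf
      (T := T.toContinuousLinearMap) hT (u : E)).hasFDerivAt
  calc mfderiv (𝓡 n) 𝓘(ℝ, ℝ) (fun v : Metric.sphere (0 : E) 1 => ⟪T v, (v : E)⟫) u = 0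
      ↔ (ℝ ∙ (u : E))ᗮ ≤ (2 • innerSL ℝ (T u)).ker :=
        mfderiv_sphere_eq_zero_iff_orthogonal_le_ker hgrad
    _ ↔ T u ∈ (ℝ ∙ (u : E))ᗮᗮ := by
        rw [Submodule.mem_orthogonal']
        simp [SetLike.le_def]
    _ ↔ T u = ⟪T u, (u : E)⟫ • (u : E) := by
        rw [Submodule.orthogonal_orthogonal, eq_comm, real_inner_comm,
          inner_smul_eq_self_iff_mem_span_singleton (norm_eq_of_mem_sphere u)]

theorem quadratic_form_critical_points_on_sphere_general [FiniteDimensional ℝ E]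
    {T : E →ₗ[ℝ] E} (hT : T.IsSymmetric) :
    (∀ u : Metric.sphere (0 : E) 1,
      mfderiv (𝓡 n) 𝓘(ℝ, ℝ) (fun v : Metric.sphere (0 : E) 1 => ⟪T v, (v : E)⟫) u = 0 ↔
        T u = ⟪T u, (u : E)⟫ • (u : E)) ∧
    (Function.Injective (hT.eigenvalues (Fact.out : Module.finrank ℝ E = n + 1)) →
      {u : Metric.sphere (0 : E) 1 |
        mfderiv (𝓡 n) 𝓘(ℝ, ℝ)
          (fun v : Metric.sphere (0 : E) 1 => ⟪T v, (v : E)⟫) u = 0}.ncard = 2 * (n + 1)) := by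
  refine ⟨mfderiv_inner_apply_self_sphere_eq_zero_iff hT, fun hinj => ?_⟩
  simp only [mfderiv_inner_apply_self_sphere_eq_zero_iff hT]
  simpa using ncard_setOf_apply_eq_inner_smul (hT.eigenvectorBasis _)
    (hT.apply_eigenvectorBasis _) hinj

end CriticalPoints

/-- For a real symmetric 3×3 matrix `P`, a point `u` of the unit sphere `S² ⊂ ℝ³` is a
critical point of the quadratic form `q(u) = ⟪P u, u⟫` on `S²` iff `P u = ⟪P u, u⟫ • u`,
i.e. iff `u` is a unit eigenvector of `P`; and if `P` has three distinct eigenvalues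
then `q` has exactly 6 critical points on `S²`. -/
theorem quadratic_form_critical_points_on_sphere
    (P : Matrix (Fin 3) (Fin 3) ℝ) (hP : P.IsHermitian) :
    (∀ u : Metric.sphere (0 : EuclideanSpace ℝ (Fin 3)) 1,
      (mfderiv (𝓡 2) 𝓘(ℝ, ℝ)
          (fun v : Metric.sphere (0 : EuclideanSpace ℝ (Fin 3)) 1 =>
            ⟪Matrix.toEuclideanLin P (v : EuclideanSpace ℝ (Fin 3)),
              (v : EuclideanSpace ℝ (Fin 3))⟫) u = 0 ↔
        Matrix.toEuclideanLin P (u : EuclideanSpace ℝ (Fin 3)) =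
          ⟪Matrix.toEuclideanLin P (u : EuclideanSpace ℝ (Fin 3)),
              (u : EuclideanSpace ℝ (Fin 3))⟫ • (u : EuclideanSpace ℝ (Fin 3)))) ∧
    (Function.Injective hP.eigenvalues →
      Set.ncard {u : Metric.sphere (0 : EuclideanSpace ℝ (Fin 3)) 1 |
        mfderiv (𝓡 2) 𝓘(ℝ, ℝ)
          (fun v : Metric.sphere (0 : EuclideanSpace ℝ (Fin 3)) 1 =>
            ⟪Matrix.toEuclideanLin P (v : EuclideanSpace ℝ (Fin 3)),
              (v : EuclideanSpace ℝ (Fin 3))⟫) u = 0} = 6) := by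
  obtain ⟨critical_iff, ncard_critical⟩ :=
    quadratic_form_critical_points_on_sphere_general (n := 2) (isSymmetric_toEuclideanLin_iff.2 hP)
  exact ⟨critical_iff, fun hinj => ncard_critical ((Equiv.injective_comp _ _).1 hinj)⟩
end
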